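/- arXiv:2008.09971 — 6 statements merged into one kernel-verified Lean document; each statement's English description precedes it below -/
import Mathlib

section
/- Let b ≥ 2 and i ≥ 1 be integers and r ∈ {0, 1, …, b−1} a digit. There exists a constant C > 0 (depending only on b, r, i) such that for all real T ≥ 2, |Φ(T; b, r; i) − c(b, r; i)·T²| ≤ C·T·log T. -/
/-!
With `B = b ^ i`, the `i`-th base-`b` digit of `n / m` is `⌊B n / m⌋ mod b`. Hence `Φ(T)` is the sum,
over the indices `j = b k + r`, of the number of lattice points `(n, m) ∈ [1, N]²`, `N = ⌊T⌋`, in the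
cone `j ≤ B n / m < j + 1` (`Phi_eq_sum`).

* For `j < B` the cone lies in `n < m`. Each row (fixed `m`) holds `m / B + O(1)` points, so the cone
  holds `N² / (2 B) + O(N)` points (`coneCount_bound_small`). The `b ^ (i - 1)` such indices yield the
  term `1 / (2 b)` of the constant.
* For `j ≥ B` only the rows with `m ≤ B N / j` meet the cone, and each has an `O(1)` error. The sum of
  the row lengths is a difference of two explicit arithmetic progressions, equal to
  `B N² / (2 j (j + 1))` plus half of `j ψ(B N / j) - (j + 1) ψ(B N / (j + 1))` divided by `B`, with
  `ψ(x) = {x} (1 - {x})`. Since `ψ` is `1`-Lipschitz, the whole error is `O(B N / j + 1)`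
  (`coneCount_bound`).

Only `O(N)` indices matter: the errors add up to `O(N log N)`, and the part of the series beyond them
is `O(1 / N)` (`tailSeries_bounds`). Passing from `N` to `T` costs `O(T)`.
-/

open scoped BigOperators

/-- The `i`-th digit after the point of the base-`b` expansion of `x`. -/
noncomputable def digitOf (b i : ℕ) (x : ℝ) : ℤ :=
  ⌊(b : ℝ) * Int.fract ((b : ℝ) ^ (i - 1) * x)⌋

/-- The set `𝒜(T; b, r; i)` of lattice points `(n, m)` with `1 ≤ n, m ≤ T` whose quotient
has `i`-th digit equal to `r` in base `b`. -/
def digitSet (T : ℝ) (b r i : ℕ) : Set (ℕ × ℕ) :=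
  {p | 1 ≤ p.1 ∧ (p.1 : ℝ) ≤ T ∧ 1 ≤ p.2 ∧ (p.2 : ℝ) ≤ T ∧
    digitOf b i ((p.1 : ℝ) / (p.2 : ℝ)) = (r : ℤ)}

/-- `Φ(T; b, r; i)`. -/
noncomputable def Phi (T : ℝ) (b r i : ℕ) : ℕ := (digitSet T b r i).ncard

/-- The series `Σ_{k ≥ b^{i-1}} b^i / ((bk+r)(bk+r+1))`, written with the shift
`k ↦ k + b^{i-1}`. -/
noncomputable def tailSeries (b r i : ℕ) : ℝ :=
  ∑' k : ℕ, (b : ℝ) ^ i /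
    (((b : ℝ) * (k + b ^ (i - 1)) + r) * ((b : ℝ) * (k + b ^ (i - 1)) + r + 1))

/-- The constant `c(b, r; i)`. -/
noncomputable def cconst (b r i : ℕ) : ℝ := 1 / (2 * b) + (1 / 2) * tailSeries b r i

/-! ### Counting along a row of a cone -/

lemma card_mul_lt (B N t : ℕ) (hB : 1 ≤ B) :
    (((Finset.Icc 1 N).filter (fun n => B * n < t)).card) = min N ((t - 1) / B) := by
  have : (Finset.Icc 1 N).filter (fun n => B * n < t) = Finset.Icc 1 (min N ((t - 1) / B)) := by
    ext n
    simp only [Finset.mem_filter, Finset.mem_Icc, le_min_iff, Nat.le_div_iff_mul_le hB]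
    constructor
    · rintro ⟨⟨h1, h2⟩, h3⟩
      refine ⟨h1, h2, ?_⟩
      rw [mul_comm n B]; omega
    · rintro ⟨h1, h2, h3⟩
      refine ⟨⟨h1, h2⟩, ?_⟩
      have : 1 ≤ n * B := Nat.mul_pos h1 hB
      rw [mul_comm B n]; omega
  rw [this]; simp

lemma card_mul_lt_bounds (B N t : ℕ) (hB : 1 ≤ B) :
    min (N : ℝ) ((t : ℝ) / B) - 1 ≤ (((Finset.Icc 1 N).filter (fun n => B * n < t)).card : ℝ) ∧
    (((Finset.Icc 1 N).filter (fun n => B * n < t)).card : ℝ) ≤ min (N : ℝ) ((t : ℝ) / B) := by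
  rw [card_mul_lt B N t hB]
  have hB' : (0 : ℝ) < B := by exact_mod_cast hB
  have h1 : (((t - 1) / B : ℕ) : ℝ) ≤ (t : ℝ) / B := by
    refine Nat.cast_div_le.trans ?_
    gcongr
    omega
  have h2 : (t : ℝ) / B - 1 ≤ (((t - 1) / B : ℕ) : ℝ) := by
    rw [sub_le_iff_le_add, div_le_iff₀ hB']
    have h := Nat.lt_mul_div_succ (t - 1) hB
    have : t ≤ ((t - 1) / B + 1) * B := by rw [mul_comm]; omega
    exact_mod_cast this
  push_cast
  constructor
  · rw [sub_le_iff_le_add]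
    refine le_trans ?_ (min_add_add_right _ _ _).le
    apply min_le_min <;> linarith
  · exact min_le_min le_rfl h1

/-- For fixed `m`, the number of `1 ≤ n ≤ N` with `⌊B n / m⌋ = j`. -/
noncomputable def rowCount (B N j m : ℕ) : ℕ :=
  ((Finset.Icc 1 N).filter (fun n => B * n / m = j)).card

/-- The length of `[j m / B, (j + 1) m / B) ∩ [0, N]`, the real counterpart of `rowCount`. -/
noncomputable def rowLength (B N j m : ℕ) : ℝ :=
  min (N : ℝ) (((j + 1) * m : ℝ) / B) - min (N : ℝ) ((j * m : ℝ) / B)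

lemma rowCount_add (B N j m : ℕ) (hm : 1 ≤ m) :
    rowCount B N j m + ((Finset.Icc 1 N).filter (fun n => B * n < j * m)).card =
      ((Finset.Icc 1 N).filter (fun n => B * n < (j + 1) * m)).card := by
  unfold rowCount
  rw [← Finset.card_union_of_disjoint]
  · congr 1
    ext n
    simp only [Finset.mem_union, Finset.mem_filter, Nat.div_eq_iff hm]
    have : (j + 1) * m = j * m + m := by ring
    rw [this]
    by_cases h : n ∈ Finset.Icc 1 N <;> simp only [h, true_and, false_and, or_false]
    omega
  · rw [Finset.disjoint_left]
    intro n
    simp only [Finset.mem_filter, Nat.div_eq_iff hm]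
    omega

lemma rowCount_sub_le (B N j m : ℕ) (hB : 1 ≤ B) (hm : 1 ≤ m) :
    |(rowCount B N j m : ℝ) - rowLength B N j m| ≤ 1 := by
  have h := rowCount_add B N j m hm
  have h' : (rowCount B N j m : ℝ) + (((Finset.Icc 1 N).filter (fun n => B * n < j * m)).card : ℝ) =
      (((Finset.Icc 1 N).filter (fun n => B * n < (j + 1) * m)).card : ℝ) := by exact_mod_cast h
  obtain ⟨a1, a2⟩ := card_mul_lt_bounds B N (j * m) hB
  obtain ⟨b1, b2⟩ := card_mul_lt_bounds B N ((j + 1) * m) hB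
  push_cast at a1 a2 b1 b2
  unfold rowLength
  rw [abs_le]
  constructor <;> linarith

/-- Rows with `m > B N / j` miss the cone entirely, so they contribute no error. This is what makes
the total error for the `j`-th cone `O(N / j)` rather than `O(N)`. -/
lemma rowCount_eq_rowLength (B N j m : ℕ) (hB : 1 ≤ B) (hm : 1 ≤ m) (h : B * N < j * m) :
    (rowCount B N j m : ℝ) = rowLength B N j m := by
  have hB' : (0 : ℝ) < B := by exact_mod_cast hB
  have h0 : rowCount B N j m = 0 := by
    unfold rowCount
    rw [Finset.card_eq_zero, Finset.filter_eq_empty_iff]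
    intro n hn
    rw [Nat.div_eq_iff hm]
    have : B * n ≤ B * N := Nat.mul_le_mul_left _ (Finset.mem_Icc.1 hn).2
    omega
  have h' : (B * N : ℝ) < j * m := by exact_mod_cast h
  have h1 : (N : ℝ) ≤ (j * m : ℝ) / B := by
    rw [le_div_iff₀ hB']; linarith
  have h2 : (N : ℝ) ≤ ((j + 1) * m : ℝ) / B := by
    rw [le_div_iff₀ hB']; nlinarith [(Nat.cast_nonneg m : (0 : ℝ) ≤ m)]
  rw [h0, rowLength, min_eq_left h1, min_eq_left h2]; simp

/-- The number of lattice points `(n, m) ∈ [1, N]²` with `⌊B n / m⌋ = j`, that is, in the cone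
`j ≤ B n / m < j + 1`. -/
noncomputable def coneCount (B N j : ℕ) : ℕ := ∑ m ∈ Finset.Icc 1 N, rowCount B N j m

lemma coneCount_sub_rowLength (B N j : ℕ) (hB : 1 ≤ B) (hj : 1 ≤ j) :
    |(coneCount B N j : ℝ) - ∑ m ∈ Finset.Icc 1 N, rowLength B N j m| ≤ (B * N : ℝ) / j := by
  have hj' : (0 : ℝ) < j := by exact_mod_cast hj
  unfold coneCount
  push_cast
  rw [← Finset.sum_sub_distrib]
  calc |∑ m ∈ Finset.Icc 1 N, ((rowCount B N j m : ℝ) - rowLength B N j m)|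
      ≤ ∑ m ∈ Finset.Icc 1 N, |(rowCount B N j m : ℝ) - rowLength B N j m| :=
        Finset.abs_sum_le_sum_abs _ _
    _ ≤ ∑ m ∈ Finset.Icc 1 N, if m ∈ Finset.Icc 1 (B * N / j) then (1 : ℝ) else 0 := by
        apply Finset.sum_le_sum
        intro m hm
        have hm1 := (Finset.mem_Icc.1 hm).1
        split_ifs with h
        · exact rowCount_sub_le B N j m hB hm1
        · rw [rowCount_eq_rowLength B N j m hB hm1]
          · simp
          · by_contra hc
            apply h
            rw [Finset.mem_Icc, Nat.le_div_iff_mul_le hj, mul_comm m j]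
            omega
    _ ≤ ((B * N / j : ℕ) : ℝ) := by
        rw [← Finset.sum_filter, Finset.sum_const, nsmul_eq_mul, mul_one]
        have : ((Finset.Icc 1 N).filter (fun m => m ∈ Finset.Icc 1 (B * N / j))).card ≤
            (Finset.Icc 1 (B * N / j)).card :=
          Finset.card_le_card (fun m hm => (Finset.mem_filter.1 hm).2)
        rw [Nat.card_Icc] at this
        exact_mod_cast this
    _ ≤ (B * N : ℝ) / j := by
        refine Nat.cast_div_le.trans ?_
        push_cast; rfl

/-! ### Exact evaluation of the sum of row lengths -/

/-- The `1`-periodic function `{x} (1 - {x})`. -/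
noncomputable def bump (x : ℝ) : ℝ := Int.fract x * (1 - Int.fract x)

lemma bump_nonneg (x : ℝ) : 0 ≤ bump x :=
  mul_nonneg (Int.fract_nonneg x) (by linarith [Int.fract_lt_one x])

lemma bump_le_one (x : ℝ) : bump x ≤ 1 := by
  unfold bump
  nlinarith [Int.fract_nonneg x, Int.fract_lt_one x]

/-- `bump` is `1`-Lipschitz. If `y` and `x` lie in different unit intervals, then `bump x` is at most
the distance from `x` down to `⌊x⌋ ≥ y`, and `bump y` at most the distance from `y` up to
`⌊y⌋ + 1 ≤ x`. -/
lemma abs_bump_sub_le {x y : ℝ} (h : y ≤ x) : |bump x - bump y| ≤ x - y := by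
  have fx0 := Int.fract_nonneg x
  have fx1 := (Int.fract_lt_one x).le
  have fy0 := Int.fract_nonneg y
  have fy1 := (Int.fract_lt_one y).le
  have ex := Int.self_sub_floor x
  have ey := Int.self_sub_floor y
  rcases (Int.floor_le_floor h).eq_or_lt with hf | hf
  · rw [hf] at ey
    have : x - y = Int.fract x - Int.fract y := by linarith
    rw [this]
    have : 0 ≤ Int.fract x - Int.fract y := by linarith
    unfold bump
    rw [abs_le]
    constructor <;> nlinarith
  · have hf' : (⌊y⌋ : ℝ) + 1 ≤ ⌊x⌋ := by exact_mod_cast hf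
    have h1 := bump_nonneg x
    have h2 := bump_nonneg y
    have h3 : bump x ≤ Int.fract x := by unfold bump; nlinarith
    have h4 : bump y ≤ 1 - Int.fract y := by unfold bump; nlinarith
    rw [abs_le]
    constructor <;> linarith

/-- The sum over `1 ≤ m ≤ N` of the length of `[j m / B, N]`, taken as `0` for an empty interval. -/
noncomputable def coneSum (B N j : ℕ) : ℝ :=
  ∑ m ∈ Finset.Icc 1 N, max 0 ((N : ℝ) - (j * m : ℝ) / B)

lemma sum_rowLength (B N j : ℕ) :
    ∑ m ∈ Finset.Icc 1 N, rowLength B N j m = coneSum B N j - coneSum B N (j + 1) := by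
  unfold coneSum rowLength
  rw [← Finset.sum_sub_distrib]
  apply Finset.sum_congr rfl
  intro m _
  push_cast
  have key : ∀ a c : ℝ, min a c = a - max 0 (a - c) := by
    intro a c
    rcases le_total a c with h | h
    · rw [min_eq_left h, max_eq_left (by linarith)]; ring
    · rw [min_eq_right h, max_eq_right (by linarith)]; ring
  rw [key, key]; ring

lemma sum_Icc_id_real (M : ℕ) : ∑ m ∈ Finset.Icc 1 M, (m : ℝ) = M * (M + 1) / 2 := by
  induction M with
  | zero => simp
  | succ k ih => rw [Finset.sum_Icc_succ_top (by omega), ih]; push_cast; ring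

/-- For `j ≥ B` the summands vanish beyond `M = ⌊B N / j⌋ ≤ N`, so `coneSum` is a finite arithmetic
progression. In its closed form the quadratic remainder is `j` times a periodic function of
`B N / j`, and the term `B N` does not depend on `j`. -/
lemma coneSum_eq (B N j : ℕ) (hB : 1 ≤ B) (hj : B ≤ j) :
    coneSum B N j =
      ((B * N : ℝ) ^ 2 / j - B * N + j * bump ((B * N : ℝ) / j)) / (2 * B) := by
  have hj0 : 0 < j := by omega
  have hB' : (0 : ℝ) < B := by exact_mod_cast hB
  have hj' : (0 : ℝ) < j := by exact_mod_cast hj0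
  set M := B * N / j with hM
  have hMN : M ≤ N := by
    rw [hM]
    exact Nat.div_le_of_le_mul (Nat.mul_le_mul_right _ hj)
  have hsplit : coneSum B N j = ∑ m ∈ Finset.Icc 1 M, ((N : ℝ) - (j * m : ℝ) / B) := by
    unfold coneSum
    rw [← Finset.sum_subset (Finset.Icc_subset_Icc_right hMN)]
    · apply Finset.sum_congr rfl
      intro m hm
      apply max_eq_right
      have h2 := (Finset.mem_Icc.1 hm).2
      rw [hM, Nat.le_div_iff_mul_le hj0] at h2
      have : (m * j : ℝ) ≤ B * N := by exact_mod_cast h2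
      rw [sub_nonneg, div_le_iff₀ hB']; linarith
    · intro m hm hm'
      apply max_eq_left
      have h2 : ¬ m ≤ M := fun h => hm' (Finset.mem_Icc.2 ⟨(Finset.mem_Icc.1 hm).1, h⟩)
      rw [hM, Nat.le_div_iff_mul_le hj0] at h2
      have : (B * N : ℝ) < m * j := by exact_mod_cast not_le.1 h2
      rw [sub_nonpos, le_div_iff₀ hB']; linarith
  have hfr : Int.fract ((B * N : ℝ) / j) = (B * N : ℝ) / j - M := by
    rw [← Int.self_sub_floor]
    congr 1
    have : ⌊(B * N : ℝ) / j⌋ = (M : ℤ) := by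
      rw [← Int.natCast_floor_eq_floor (by positivity)]
      have := Nat.floor_div_eq_div (K := ℝ) (B * N) j
      push_cast at this
      rw [this]
    rw [this]; simp
  rw [hsplit, bump, hfr, Finset.sum_sub_distrib, ← Finset.sum_div, ← Finset.mul_sum,
    sum_Icc_id_real]
  simp only [Finset.sum_const, Nat.card_Icc, nsmul_eq_mul, Nat.add_sub_cancel]
  field_simp
  ring

/-- In the difference of two consecutive values of `coneSum` the `j`-independent term cancels, and
the Lipschitz bound for `bump` controls the remainder by `O(B N / j + 1)`. -/
lemma coneCount_bound (B N j : ℕ) (hB : 1 ≤ B) (hj : B ≤ j) :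
    |(coneCount B N j : ℝ) - (N : ℝ) ^ 2 * (B / (j * (j + 1))) / 2| ≤ 2 * (B * N : ℝ) / j + 1 := by
  have hj0 : 1 ≤ j := by omega
  have hB' : (1 : ℝ) ≤ B := by exact_mod_cast hB
  have hj' : (0 : ℝ) < j := by exact_mod_cast hj0
  have h1 := coneCount_sub_rowLength B N j hB hj0
  rw [sum_rowLength, coneSum_eq B N j hB hj, coneSum_eq B N (j + 1) hB (by omega)] at h1
  push_cast at h1
  set X : ℝ := B * N with hX
  have hX0 : 0 ≤ X := by positivity
  set p := bump (X / j)
  set q := bump (X / (j + 1))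
  have hle : X / (j + 1) ≤ X / j := by gcongr; linarith
  have hp : |p - q| ≤ X / j - X / (j + 1) := abs_bump_sub_le hle
  have hq0 : 0 ≤ q := bump_nonneg _
  have hq1 : q ≤ 1 := bump_le_one _
  have hdiff : j * (X / j - X / (j + 1)) = X / (j + 1) := by field_simp; ring
  have hD : |j * p - (j + 1) * q| ≤ X / j + 1 := by
    have e : j * p - (j + 1) * q = j * (p - q) - q := by ring
    rw [e]
    refine (abs_sub _ _).trans ?_
    rw [abs_mul, abs_of_pos hj', abs_of_nonneg hq0]
    have := mul_le_mul_of_nonneg_left hp hj'.le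
    linarith
  have hmain : (X ^ 2 / j - X + j * p) / (2 * B) - (X ^ 2 / (j + 1) - X + (j + 1) * q) / (2 * B)
      = (N : ℝ) ^ 2 * (B / (j * (j + 1))) / 2 + (j * p - (j + 1) * q) / (2 * B) := by
    rw [hX]; field_simp; ring
  rw [hmain] at h1
  have hD' : |(j * p - (j + 1) * q) / (2 * B)| ≤ X / j + 1 := by
    rw [abs_div, abs_of_pos (by positivity : (0 : ℝ) < 2 * B)]
    refine (div_le_self (abs_nonneg _) (by linarith)).trans hD
  have e2 : 2 * X / j = X / j + X / j := by ring
  rw [e2]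
  rw [abs_le] at h1 hD' ⊢
  constructor <;> linarith

/-- The cones in the region `n < m`: there the constraint `n ≤ N` is implied by `m ≤ N`. -/
lemma coneCount_bound_small (B N j : ℕ) (hB : 1 ≤ B) (hj : j < B) :
    |(coneCount B N j : ℝ) - (N : ℝ) ^ 2 / (2 * B)| ≤ 2 * (N : ℝ) := by
  have hB' : (1 : ℝ) ≤ B := by exact_mod_cast hB
  have hjB : (j : ℝ) + 1 ≤ B := by exact_mod_cast hj
  have hlen : ∑ m ∈ Finset.Icc 1 N, rowLength B N j m = N * (N + 1) / 2 / B := by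
    rw [← sum_Icc_id_real, Finset.sum_div]
    apply Finset.sum_congr rfl
    intro m hm
    have hmN : (m : ℝ) ≤ N := by exact_mod_cast (Finset.mem_Icc.1 hm).2
    have hm0 : (0 : ℝ) ≤ m := Nat.cast_nonneg m
    have hj0 : (0 : ℝ) ≤ j := Nat.cast_nonneg j
    unfold rowLength
    rw [min_eq_right, min_eq_right]
    · field_simp; ring
    · rw [div_le_iff₀ (by linarith)]; nlinarith
    · rw [div_le_iff₀ (by linarith)]; nlinarith
  have h1 : |(coneCount B N j : ℝ) - ∑ m ∈ Finset.Icc 1 N, rowLength B N j m| ≤ N := by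
    unfold coneCount
    push_cast
    rw [← Finset.sum_sub_distrib]
    refine (Finset.abs_sum_le_sum_abs _ _).trans ?_
    refine (Finset.sum_le_sum (fun m hm =>
      rowCount_sub_le B N j m hB (Finset.mem_Icc.1 hm).1)).trans ?_
    simp
  rw [hlen] at h1
  have e : (N : ℝ) * (N + 1) / 2 / B = N ^ 2 / (2 * B) + N / (2 * B) := by field_simp
  have h2 : (N : ℝ) / (2 * B) ≤ N := div_le_self (Nat.cast_nonneg N) (by linarith)
  have h3 : 0 ≤ (N : ℝ) / (2 * B) := by positivity
  rw [e] at h1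
  rw [abs_le] at h1 ⊢
  constructor <;> linarith

/-! ### Digits of quotients as residues of integer quotients -/

lemma digitOf_div (b i n m : ℕ) (hb : 2 ≤ b) (hi : 1 ≤ i) :
    digitOf b i ((n : ℝ) / (m : ℝ)) = ((b ^ i * n / m % b : ℕ) : ℤ) := by
  have hb0 : (0 : ℝ) < b := by exact_mod_cast (by omega : 0 < b)
  obtain ⟨k, rfl⟩ : ∃ k, i = k + 1 := ⟨i - 1, by omega⟩
  unfold digitOf
  have f1 : ∀ e : ℕ, ⌊(b : ℝ) ^ e * ((n : ℝ) / m)⌋ = ((b ^ e * n / m : ℕ) : ℤ) := by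
    intro e
    rw [← Int.natCast_floor_eq_floor (by positivity), ← Nat.floor_div_eq_div (K := ℝ) (b ^ e * n) m]
    push_cast
    rw [mul_div_assoc]
  have e1 : (b : ℝ) * Int.fract ((b : ℝ) ^ (k + 1 - 1) * ((n : ℝ) / m)) =
      (b : ℝ) ^ (k + 1) * ((n : ℝ) / m) - ((b * (b ^ k * n / m : ℕ) : ℤ) : ℝ) := by
    rw [Nat.add_sub_cancel, ← Int.self_sub_floor, f1 k]
    push_cast
    ring
  rw [e1, Int.floor_sub_intCast, f1]
  have e2 : b ^ k * n / m = b ^ (k + 1) * n / m / b := by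
    rw [Nat.div_div_eq_div_mul, pow_succ', mul_assoc, mul_comm m b,
      Nat.mul_div_mul_left _ _ (by omega)]
  have h := Nat.div_add_mod (b ^ (k + 1) * n / m) b
  rw [← e2] at h
  have h' : ((b * (b ^ k * n / m) + b ^ (k + 1) * n / m % b : ℕ) : ℤ) =
      ((b ^ (k + 1) * n / m : ℕ) : ℤ) := by rw [h]
  rw [← h', Nat.cast_add, Nat.cast_mul]
  ring

/-- `Φ(T)` decomposes over the cones of index `b k + r`; those with `k > b ^ i ⌊T⌋` are empty. -/
lemma Phi_eq_sum (b r i : ℕ) (hb : 2 ≤ b) (hi : 1 ≤ i) (hr : r < b) (T : ℝ) (hT : 0 ≤ T) (K : ℕ)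
    (hK : b ^ i * ⌊T⌋₊ < K) :
    Phi T b r i = ∑ k ∈ Finset.range K, coneCount (b ^ i) ⌊T⌋₊ (b * k + r) := by
  set N := ⌊T⌋₊ with hN
  have hset : digitSet T b r i =
      (((Finset.Icc 1 N ×ˢ Finset.Icc 1 N).filter
        (fun p : ℕ × ℕ => b ^ i * p.1 / p.2 % b = r) : Finset (ℕ × ℕ)) : Set (ℕ × ℕ)) := by
    ext ⟨n, m⟩
    simp only [digitSet, Set.mem_ofPred_eq, Finset.coe_filter, Finset.mem_product, Finset.mem_Icc,
      digitOf_div b i n m hb hi, hN, Nat.le_floor_iff hT, Nat.cast_inj]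
    tauto
  unfold Phi
  rw [hset, Set.ncard_coe_finset]
  rw [Finset.card_eq_sum_card_fiberwise (f := fun p : ℕ × ℕ => b ^ i * p.1 / p.2 / b)
    (t := Finset.range K)]
  · apply Finset.sum_congr rfl
    intro k _
    unfold coneCount rowCount
    rw [← Finset.card_sigma]
    apply Finset.card_bij (fun (p : ℕ × ℕ) _ => (⟨p.2, p.1⟩ : Σ _ : ℕ, ℕ))
    · rintro ⟨n, m⟩ h
      simp only [Finset.mem_filter, Finset.mem_product, Finset.mem_sigma] at h ⊢
      obtain ⟨⟨⟨h1, h2⟩, h3⟩, h4⟩ := h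
      refine ⟨h2, h1, ?_⟩
      have := Nat.div_add_mod (b ^ i * n / m) b
      rw [h3, h4] at this
      exact this.symm
    · rintro ⟨n, m⟩ _ ⟨n', m'⟩ _ h
      simp only [Sigma.mk.injEq, heq_eq_eq] at h
      simp [h.1, h.2]
    · rintro ⟨m, n⟩ h
      simp only [Finset.mem_filter, Finset.mem_sigma] at h
      refine ⟨(n, m), ?_, rfl⟩
      simp only [Finset.mem_filter, Finset.mem_product]
      refine ⟨⟨⟨h.2.1, h.1⟩, ?_⟩, ?_⟩
      · rw [h.2.2, Nat.mul_add_mod, Nat.mod_eq_of_lt hr]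
      · rw [h.2.2, Nat.mul_add_div (by omega), Nat.div_eq_of_lt hr, add_zero]
  · rintro ⟨n, m⟩ h
    simp only [Finset.coe_filter, Set.mem_ofPred_eq, Finset.mem_product, Finset.mem_Icc] at h
    simp only [Finset.coe_range, Set.mem_Iio]
    refine lt_of_le_of_lt ?_ hK
    refine (Nat.div_le_self _ _).trans ((Nat.div_le_self _ _).trans ?_)
    exact Nat.mul_le_mul_left _ h.1.1.2

/-! ### The tail series -/

/-- The `l`-th term of `tailSeries`; it equals `b ^ i / (j (j + 1))` for
`j = b (l + b ^ (i - 1)) + r`. -/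
noncomputable def tailTerm (b r i l : ℕ) : ℝ :=
  (b : ℝ) ^ i / (((b : ℝ) * (l + b ^ (i - 1)) + r) * ((b : ℝ) * (l + b ^ (i - 1)) + r + 1))

lemma succ_le_index (b r i l : ℕ) (hb : 2 ≤ b) :
    (l : ℝ) + 1 ≤ (b : ℝ) * (l + b ^ (i - 1)) + r := by
  have h1 : 1 ≤ b ^ (i - 1) := Nat.one_le_pow _ _ (by omega)
  have : l + 1 ≤ b * (l + b ^ (i - 1)) + r := by nlinarith
  exact_mod_cast this

lemma tailTerm_nonneg (b r i l : ℕ) : 0 ≤ tailTerm b r i l := by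
  unfold tailTerm; positivity

lemma tailTerm_le (b r i l : ℕ) (hb : 2 ≤ b) :
    tailTerm b r i l ≤ (b : ℝ) ^ i / (l + 1) - (b : ℝ) ^ i / (l + 2) := by
  have h := succ_le_index b r i l hb
  have hl : (0 : ℝ) ≤ l := Nat.cast_nonneg l
  have e : (b : ℝ) ^ i / (l + 1) - (b : ℝ) ^ i / (l + 2) = (b : ℝ) ^ i / ((l + 1) * (l + 2)) := by
    field_simp; ring
  rw [e]
  unfold tailTerm
  refine div_le_div_of_nonneg_left (by positivity) (by positivity) ?_
  exact mul_le_mul h (by linarith) (by positivity) (by positivity)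

lemma sum_tailTerm_le (b r i s n : ℕ) (hb : 2 ≤ b) :
    ∑ l ∈ Finset.range n, tailTerm b r i (l + s) ≤ (b : ℝ) ^ i / (s + 1) := by
  have h : ∑ l ∈ Finset.range n, tailTerm b r i (l + s) ≤
      (b : ℝ) ^ i / (s + 1) - (b : ℝ) ^ i / (n + s + 1) := by
    induction n with
    | zero => simp
    | succ n ih =>
      rw [Finset.sum_range_succ]
      have := tailTerm_le b r i (n + s) hb
      push_cast at this ⊢
      have e : (n : ℝ) + 1 + s + 1 = n + s + 2 := by ring
      rw [e]
      linarith
  have : 0 ≤ (b : ℝ) ^ i / (n + s + 1) := by positivity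
  linarith

lemma summable_tailTerm (b r i : ℕ) (hb : 2 ≤ b) : Summable (tailTerm b r i) :=
  summable_of_sum_range_le (fun l => tailTerm_nonneg b r i l)
    (fun n => by simpa using sum_tailTerm_le b r i 0 n hb)

lemma tailSeries_bounds (b r i L : ℕ) (hb : 2 ≤ b) :
    ∑ l ∈ Finset.range L, tailTerm b r i l ≤ tailSeries b r i ∧
    tailSeries b r i ≤ ∑ l ∈ Finset.range L, tailTerm b r i l + (b : ℝ) ^ i / (L + 1) := by
  have hs := summable_tailTerm b r i hb
  have e : tailSeries b r i = ∑' l, tailTerm b r i l := rfl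
  rw [e]
  constructor
  · exact hs.sum_le_tsum _ (fun l _ => tailTerm_nonneg b r i l)
  · rw [← hs.sum_add_tsum_nat_add L]
    gcongr
    exact Real.tsum_le_of_sum_range_le (fun l => tailTerm_nonneg b r i _)
      (fun n => sum_tailTerm_le b r i L n hb)

/-! ### The asymptotic formula -/

/-- The asymptotic formula with `T` replaced by `⌊T⌋` in the main term. The error `O(B N / j)` of the
cones sums to a harmonic sum, which is where the logarithm comes from. -/
lemma Phi_sub_floor_bound (b r i : ℕ) (hb : 2 ≤ b) (hi : 1 ≤ i) (hr : r < b) (T : ℝ) (hT : 0 ≤ T) :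
    |(Phi T b r i : ℝ) - cconst b r i * (⌊T⌋₊ : ℝ) ^ 2| ≤
      2 * (b : ℝ) ^ i * ⌊T⌋₊ * (2 + Real.log ((b : ℝ) ^ i * ⌊T⌋₊ + 1)) +
        ((b : ℝ) ^ i * ⌊T⌋₊ + 1) + ⌊T⌋₊ := by
  set P := b ^ (i - 1) with hP
  have hBP : b ^ i = b * P := by
    rw [hP, ← pow_succ', Nat.sub_add_cancel hi]
  have hP1 : 1 ≤ P := Nat.one_le_pow _ _ (by omega)
  have hB1 : 1 ≤ b ^ i := Nat.one_le_pow _ _ (by omega)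
  set L := b ^ i * ⌊T⌋₊ + 1 with hL
  rw [Phi_eq_sum b r i hb hi hr T hT (P + L) (by omega)]
  set N := ⌊T⌋₊
  have hN0 : (0 : ℝ) ≤ N := Nat.cast_nonneg N
  have hb0 : (0 : ℝ) < b := by exact_mod_cast (by omega : 0 < b)
  have hP0 : (1 : ℝ) ≤ P := by exact_mod_cast hP1
  have hBPr : (b : ℝ) ^ i = b * P := by exact_mod_cast hBP
  have hLr : (b : ℝ) ^ i * N + 1 = L := by rw [hL]; push_cast; rfl
  rw [hLr]
  rw [Finset.sum_range_add]
  push_cast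
  -- The cones of index below `b ^ i` fill the region `n < m`.
  have h1 : |∑ k ∈ Finset.range P, (coneCount (b ^ i) N (b * k + r) : ℝ) - N ^ 2 / (2 * b)| ≤
      2 * (b : ℝ) ^ i * N := by
    have e : (N : ℝ) ^ 2 / (2 * b) = ∑ k ∈ Finset.range P, (N : ℝ) ^ 2 / (2 * (b ^ i : ℕ)) := by
      rw [Finset.sum_const, Finset.card_range, nsmul_eq_mul, hBP]
      push_cast
      field_simp
    rw [e, ← Finset.sum_sub_distrib]
    refine (Finset.abs_sum_le_sum_abs _ _).trans ?_
    refine (Finset.sum_le_sum (fun k hk =>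
      coneCount_bound_small (b ^ i) N (b * k + r) hB1 ?_)).trans ?_
    · have : k + 1 ≤ P := Finset.mem_range.1 hk
      rw [hBP]
      nlinarith
    · rw [Finset.sum_const, Finset.card_range, nsmul_eq_mul, hBPr]
      have : (1 : ℝ) ≤ b := by exact_mod_cast (by omega : 1 ≤ b)
      nlinarith [mul_nonneg hN0 (by linarith : (0 : ℝ) ≤ P)]
  -- The cones of index at least `b ^ i` fill the region `m ≤ n`.
  have h2 : |∑ l ∈ Finset.range L, (coneCount (b ^ i) N (b * (P + l) + r) : ℝ) -
      N ^ 2 * (∑ l ∈ Finset.range L, tailTerm b r i l) / 2| ≤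
      2 * (b : ℝ) ^ i * N * (1 + Real.log L) + L := by
    rw [Finset.mul_sum, Finset.sum_div, ← Finset.sum_sub_distrib]
    refine (Finset.abs_sum_le_sum_abs _ _).trans ?_
    have hterm : ∀ l ∈ Finset.range L, |(coneCount (b ^ i) N (b * (P + l) + r) : ℝ) -
        N ^ 2 * tailTerm b r i l / 2| ≤ 2 * (b : ℝ) ^ i * N * ((l : ℝ) + 1)⁻¹ + 1 := by
      intro l _
      have h := coneCount_bound (b ^ i) N (b * (P + l) + r) hB1 (by rw [hBP]; nlinarith)
      have hj := succ_le_index b r i l hb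
      have hPr : (P : ℝ) = (b : ℝ) ^ (i - 1) := by rw [hP]; push_cast; rfl
      have e : ((b * (P + l) + r : ℕ) : ℝ) = (b : ℝ) * (l + b ^ (i - 1)) + r := by
        push_cast; rw [hPr]; ring
      rw [e, Nat.cast_pow] at h
      unfold tailTerm
      refine h.trans ?_
      gcongr
      rw [← div_eq_mul_inv, ← mul_assoc]
      gcongr
    refine (Finset.sum_le_sum hterm).trans ?_
    rw [Finset.sum_add_distrib, ← Finset.mul_sum]
    have hh : ∑ l ∈ Finset.range L, ((l : ℝ) + 1)⁻¹ ≤ 1 + Real.log L := by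
      have := harmonic_le_one_add_log L
      unfold harmonic at this
      push_cast at this
      exact this
    simp only [Finset.sum_const, Finset.card_range, nsmul_eq_mul, mul_one]
    gcongr
  obtain ⟨h3, h4⟩ := tailSeries_bounds b r i L hb
  set S := ∑ l ∈ Finset.range L, tailTerm b r i l
  have h5 : (N : ℝ) ^ 2 * ((b : ℝ) ^ i / (L + 1)) ≤ N := by
    rw [← mul_div_assoc, div_le_iff₀ (by positivity), ← hLr]
    nlinarith
  have h6 := mul_le_mul_of_nonneg_left h3 (sq_nonneg (N : ℝ))
  have h7 := mul_le_mul_of_nonneg_left h4 (sq_nonneg (N : ℝ))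
  have ec : cconst b r i * (N : ℝ) ^ 2 = N ^ 2 / (2 * b) + N ^ 2 * tailSeries b r i / 2 := by
    unfold cconst; ring
  rw [ec]
  rw [abs_le] at h1 h2 ⊢
  constructor <;> linarith

theorem stmt0 (b r i : ℕ) (hb : 2 ≤ b) (hi : 1 ≤ i) (hr : r < b) :
    ∃ C : ℝ, 0 < C ∧ ∀ T : ℝ, 2 ≤ T →
      |(Phi T b r i : ℝ) - cconst b r i * T ^ 2| ≤ C * T * Real.log T := by
  set B : ℝ := (b : ℝ) ^ i with hB
  have hb2 : (2 : ℝ) ≤ b := by exact_mod_cast hb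
  have hB1 : 1 ≤ B := one_le_pow₀ (by linarith)
  refine ⟨2 * B + 2 * (4 * B ^ 2 + 8 * B + 4), by positivity, ?_⟩
  intro T hT
  have hmain := Phi_sub_floor_bound b r i hb hi hr T (by linarith)
  rw [← hB] at hmain
  have hN1 : (⌊T⌋₊ : ℝ) ≤ T := Nat.floor_le (by linarith)
  have hN2 : T < (⌊T⌋₊ : ℝ) + 1 := Nat.lt_floor_add_one T
  set N : ℝ := (⌊T⌋₊ : ℝ)
  have hN0 : 0 ≤ N := Nat.cast_nonneg _
  have hc0 : 0 ≤ cconst b r i := by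
    have := (tailSeries_bounds b r i 0 hb).1
    simp only [Finset.range_zero, Finset.sum_empty] at this
    unfold cconst
    positivity
  have hc1 : cconst b r i ≤ 1 + B := by
    have := (tailSeries_bounds b r i 0 hb).2
    simp only [Finset.range_zero, Finset.sum_empty, Nat.cast_zero, zero_add, div_one] at this
    have h : 1 / (2 * (b : ℝ)) ≤ 1 := by
      rw [div_le_one (by linarith)]; linarith
    unfold cconst
    rw [← hB] at this
    linarith
  have hfloor : |cconst b r i * N ^ 2 - cconst b r i * T ^ 2| ≤ (1 + B) * (2 * T) := by
    rw [← mul_sub, abs_mul, abs_of_nonneg hc0]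
    refine mul_le_mul hc1 ?_ (abs_nonneg _) (by linarith)
    rw [abs_le]
    constructor <;> nlinarith
  have hlog2 : 1 / 2 ≤ Real.log T := by
    have h1 := Real.log_two_gt_d9
    have h2 := Real.log_le_log (by norm_num) hT
    linarith
  have hBN : B * N ≤ B * T := mul_le_mul_of_nonneg_left hN1 (by linarith)
  have hlogL : Real.log (B * N + 1) ≤ 2 * B + Real.log T := by
    have h1 : B * N + 1 ≤ (2 * B) * T := by nlinarith
    have h2 := Real.log_le_log (by positivity) h1
    rw [Real.log_mul (by positivity) (by positivity)] at h2
    have h3 := Real.log_le_sub_one_of_pos (by positivity : 0 < 2 * B)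
    linarith
  have hprod : 2 * B * N * (2 + Real.log (B * N + 1)) ≤
      2 * B * T * (2 + (2 * B + Real.log T)) := by
    have : 0 ≤ Real.log (B * N + 1) := Real.log_nonneg (by nlinarith)
    gcongr
  have hall : |(Phi T b r i : ℝ) - cconst b r i * T ^ 2| ≤
      2 * B * T * (2 + (2 * B + Real.log T)) + (B * T + 1) + T + (1 + B) * (2 * T) := by
    refine (abs_sub_le _ (cconst b r i * N ^ 2) _).trans ?_
    linarith
  refine hall.trans ?_
  -- As `log T ≥ 1/2`, the terms that are only linear in `T` are absorbed.
  have h1 : (4 * B ^ 2 + 8 * B + 4) * T * (1 / 2) ≤ (4 * B ^ 2 + 8 * B + 4) * T * Real.log T := by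
    gcongr
  nlinarith
end

section
/- Let b ≥ 2 and i ≥ 1 be integers and r ∈ {0, 1, …, b−1} a digit. There exists a constant C > 0 (depending only on b, r, i) such that for all real T ≥ 2, | |{(n, m) ∈ ℕ² : 1 ≤ n, m ≤ T, gcd(n, m) = 1, φ(n/m; b; i) = r}| − (c(b, r; i)/ζ(2))·T² | ≤ C·T·(log T)², where ζ(2) = π²/6. -/
/-!
Put `q = b ^ i`. The `i`-th digit of `n / m` is `r` exactly when `⌊q n / m⌋ ≡ r (mod b)`, that is,
when `n / m` lies in one of the cells `[(b k + r) / q, (b k + r + 1) / q)`, `k ≥ 0`. Let `F u`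
(`digitLen`) be the length of the part of `[0, u]` covered by these cells.

For a fixed denominator `m`, the number of `n ≤ T` with digit `r` is `m F(T / m)` up to
`O(T / m + 1)`, because that many cells meet `[0, T / m]` (`column_card_bound`). The function `F` is
monotone, `1`-Lipschitz and satisfies `0 ≤ F u ≤ u`, so `y F(T / y)` varies by at most `2 T / m` on
`[m - 1, m]`; hence `∑_{m ≤ T} m F(T / m)` differs from `∫_0^T y F(T / y) dy` by `O(T log T)`
(`riemann_sum_bound`). By scaling the integral is `T²` times its value at `T = 1`, which summed cell
by cell equals `c(b, r; i)` (`integral_digitLen`). So the number of all pairs with digit `r` is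
`c T² + O(T (1 + log T))` for `T ≥ 1` (`pairCount_bound`).

The digit depends only on the quotient, so Möbius inversion over common divisors writes the coprime
count as `∑_{d ≤ T} μ(d) pairCount(T / d)` (`coprime_count_eq`). The main terms give
`c T² ∑_{d ≤ T} μ(d) / d²`, which is `c T² / ζ(2) + O(T)`, and the errors add up to
`O(T (1 + log T)²)`.
-/

open scoped BigOperators

/-- The set of visible (coprime) lattice points in `[1,T]²` whose quotient has `i`-th
base-`b` digit equal to `r`. -/
def coprimeDigitSet (T : ℝ) (b r i : ℕ) : Set (ℕ × ℕ) :=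
  {p | 1 ≤ p.1 ∧ (p.1 : ℝ) ≤ T ∧ 1 ≤ p.2 ∧ (p.2 : ℝ) ≤ T ∧ Nat.gcd p.1 p.2 = 1 ∧
    digitOf b i ((p.1 : ℝ) / (p.2 : ℝ)) = (r : ℤ)}

/-! ### Digits and cell lengths -/

/-- In natural-number arithmetic, the digit is the residue of `⌊b ^ i n / m⌋` modulo `b`. -/
lemma digitOf_div_eq_iff (b r i n m : ℕ) (hb : 2 ≤ b) (hi : 1 ≤ i) (hm : 1 ≤ m) :
    digitOf b i ((n : ℝ) / (m : ℝ)) = (r : ℤ) ↔ (b ^ i * n / m) % b = r := by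
  have hfr : Int.fract ((b : ℝ) ^ (i - 1) * ((n : ℝ) / m))
      = (((b ^ (i - 1) * n) % m : ℕ) : ℝ) / m := by
    rw [← Int.fract_div_natCast_eq_div_natCast_mod]
    push_cast
    congr 1
    ring
  have hfl : digitOf b i ((n : ℝ) / (m : ℝ))
      = ((b * ((b ^ (i - 1) * n) % m) / m : ℕ) : ℤ) := by
    unfold digitOf
    rw [hfr, ← mul_div_assoc, ← Nat.cast_mul,
      ← Int.natCast_floor_eq_floor (by positivity), Nat.floor_div_eq_div]
  have hmod : (b ^ i * n / m) % b = b * ((b ^ (i - 1) * n) % m) / m := by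
    obtain ⟨j, rfl⟩ : ∃ j, i = j + 1 := ⟨i - 1, by omega⟩
    simp only [Nat.add_sub_cancel]
    set Q := b ^ j * n / m
    set R := b ^ j * n % m with hR
    have h1 : b ^ (j + 1) * n = b * R + m * (b * Q) := by
      have := Nat.div_add_mod (b ^ j * n) m
      calc b ^ (j + 1) * n = b * (b ^ j * n) := by ring
        _ = b * (m * Q + R) := by rw [this]
        _ = _ := by ring
    rw [h1, Nat.add_mul_div_left _ _ hm, Nat.add_mul_mod_self_left, Nat.mod_eq_of_lt]
    rw [Nat.div_lt_iff_lt_mul hm]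
    exact Nat.mul_lt_mul_of_pos_left (Nat.mod_lt _ hm) (by omega)
  rw [hfl, hmod]
  norm_cast

/-- The length of `[0, u] ∩ [α, α + 1/q)` with `α = (b k + r) / q`: the part of `[0, u]` on which
`⌊q t⌋ = b k + r`. -/
noncomputable def cellLen (b r q k : ℕ) (u : ℝ) : ℝ :=
  max (u - ((b : ℝ) * k + r) / q) 0 - max (u - ((b : ℝ) * k + r + 1) / q) 0

/-- The length of the set of `t ∈ [0, u]` with `⌊q t⌋ ≡ r (mod b)`. -/
noncomputable def digitLen (b r q : ℕ) (u : ℝ) : ℝ := ∑' k : ℕ, cellLen b r q k u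

lemma cellLen_nonneg (b r q k : ℕ) (u : ℝ) : 0 ≤ cellLen b r q k u := by
  unfold cellLen
  have : ((b : ℝ) * k + r) / q ≤ ((b : ℝ) * k + r + 1) / q := by gcongr ?_ / _; linarith
  have := max_le_max_right 0 (sub_le_sub_left this u)
  linarith

lemma cellLen_eq_zero {b r q k : ℕ} (hb : 2 ≤ b) (hq : 1 ≤ q) {u : ℝ} (h : q * u ≤ k) :
    cellLen b r q k u = 0 := by
  unfold cellLen
  have hq' : (0 : ℝ) < q := by exact_mod_cast hq
  have hb' : (2 : ℝ) ≤ b := by exact_mod_cast hb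
  have hk : (0 : ℝ) ≤ k := by positivity
  have hr : (0 : ℝ) ≤ r := by positivity
  have h1 : u ≤ ((b : ℝ) * k + r) / q := by
    rw [le_div_iff₀ hq']; nlinarith
  have h2 : u ≤ ((b : ℝ) * k + r + 1) / q := by
    rw [le_div_iff₀ hq']; nlinarith
  rw [max_eq_right (by linarith), max_eq_right (by linarith), sub_zero]

lemma hasSum_digitLen {b r q : ℕ} (hb : 2 ≤ b) (hq : 1 ≤ q) {u : ℝ} {K : ℕ} (hK : q * u ≤ K) :
    HasSum (fun k => cellLen b r q k u) (∑ k ∈ Finset.range K, cellLen b r q k u) := by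
  apply hasSum_sum_of_ne_finset_zero
  intro k hk
  apply cellLen_eq_zero hb hq
  have : (K : ℝ) ≤ k := by simpa using hk
  linarith

lemma digitLen_eq_sum {b r q : ℕ} (hb : 2 ≤ b) (hq : 1 ≤ q) {u : ℝ} {K : ℕ} (hK : q * u ≤ K) :
    digitLen b r q u = ∑ k ∈ Finset.range K, cellLen b r q k u :=
  (hasSum_digitLen hb hq hK).tsum_eq

lemma cellLen_mono (b r q k : ℕ) : Monotone (cellLen b r q k) := by
  intro u v huv
  unfold cellLen
  have : ((b : ℝ) * k + r) / q ≤ ((b : ℝ) * k + r + 1) / q := by gcongr ?_ / _; linarith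
  rcases max_cases (u - ((b : ℝ) * k + r) / q) 0 with h1 | h1 <;>
  rcases max_cases (v - ((b : ℝ) * k + r) / q) 0 with h2 | h2 <;>
  rcases max_cases (u - ((b : ℝ) * k + r + 1) / q) 0 with h3 | h3 <;>
  rcases max_cases (v - ((b : ℝ) * k + r + 1) / q) 0 with h4 | h4 <;> linarith

lemma digitLen_mono {b r q : ℕ} (hb : 2 ≤ b) (hq : 1 ≤ q) : Monotone (digitLen b r q) := by
  intro u v huv
  obtain ⟨K, hK⟩ := exists_nat_ge (q * v)
  have hq' : (0 : ℝ) < q := by exact_mod_cast hq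
  rw [digitLen_eq_sum hb hq hK, digitLen_eq_sum hb hq (K := K) (by nlinarith)]
  exact Finset.sum_le_sum fun k _ => cellLen_mono b r q k huv

/-- With `e a = (v - a)⁺ - (u - a)⁺`, which is antitone in `a`, the increment of each cell is at most
`e α_k - e α_{k+1}`, and these telescope. -/
lemma digitLen_sub_le {b r q : ℕ} (hb : 2 ≤ b) (hq : 1 ≤ q) {u v : ℝ} (huv : u ≤ v) :
    digitLen b r q v - digitLen b r q u ≤ v - u := by
  obtain ⟨K, hK⟩ := exists_nat_ge (q * v)
  have hq' : (0 : ℝ) < q := by exact_mod_cast hq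
  have hb' : (2 : ℝ) ≤ b := by exact_mod_cast hb
  rw [digitLen_eq_sum hb hq hK, digitLen_eq_sum hb hq (K := K) (by nlinarith),
    ← Finset.sum_sub_distrib]
  set e : ℝ → ℝ := fun a => max (v - a) 0 - max (u - a) 0 with he
  have e_anti : ∀ x y, x ≤ y → e y ≤ e x := by
    intro x y hxy
    simp only [he]
    rcases max_cases (u - x) 0 with h1 | h1 <;>
    rcases max_cases (v - x) 0 with h2 | h2 <;>
    rcases max_cases (u - y) 0 with h3 | h3 <;>
    rcases max_cases (v - y) 0 with h4 | h4 <;> linarith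
  have e_nonneg : ∀ x, 0 ≤ e x := by
    intro x
    have := max_le_max_right 0 (sub_le_sub_right huv x)
    simp only [he]; linarith
  have e_le : ∀ x, e x ≤ v - u := by
    intro x
    simp only [he]
    rcases max_cases (u - x) 0 with h1 | h1 <;>
    rcases max_cases (v - x) 0 with h2 | h2 <;> linarith
  set E : ℕ → ℝ := fun k => e (((b : ℝ) * k + r) / q) with hE
  have hstep : ∀ k, cellLen b r q k v - cellLen b r q k u ≤ E k - E (k + 1) := by
    intro k
    have : E (k + 1) ≤ e (((b : ℝ) * k + r + 1) / q) := by
      apply e_anti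
      gcongr ?_ / _
      push_cast; linarith
    simp only [hE, he, cellLen] at this ⊢
    linarith
  calc _ ≤ ∑ k ∈ Finset.range K, (E k - E (k + 1)) := Finset.sum_le_sum fun k _ => hstep k
    _ = E 0 - E K := Finset.sum_range_sub' _ _
    _ ≤ v - u := by
      have := e_nonneg (((b : ℝ) * K + r) / q)
      have := e_le (((b : ℝ) * (0 : ℕ) + r) / q)
      simp only [hE]; linarith

lemma digitLen_zero {b r q : ℕ} (hb : 2 ≤ b) (hq : 1 ≤ q) : digitLen b r q 0 = 0 := by
  rw [digitLen_eq_sum hb hq (K := 0) (by simp)]; simp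

lemma digitLen_nonneg (b r q : ℕ) (u : ℝ) : 0 ≤ digitLen b r q u :=
  tsum_nonneg fun k => cellLen_nonneg b r q k u

lemma digitLen_le {b r q : ℕ} (hb : 2 ≤ b) (hq : 1 ≤ q) {u : ℝ} (hu : 0 ≤ u) :
    digitLen b r q u ≤ u := by
  have := digitLen_sub_le (r := r) hb hq hu
  rw [digitLen_zero hb hq] at this
  linarith

/-! ### The area constant -/

lemma integral_max_of_le_one {a : ℝ} (ha1 : a ≤ 1) :
    ∫ y in (0 : ℝ)..1, max (1 - a * y) 0 = 1 - a / 2 := by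
  have : ∫ y in (0 : ℝ)..1, max (1 - a * y) 0 = ∫ y in (0 : ℝ)..1, (1 - a * y) := by
    apply intervalIntegral.integral_congr
    intro y hy
    rw [Set.uIcc_of_le zero_le_one] at hy
    exact max_eq_left (by nlinarith [hy.1, hy.2])
  rw [this, intervalIntegral.integral_sub (by simp)
    ((by fun_prop : Continuous fun y : ℝ => a * y).intervalIntegrable _ _)]
  rw [intervalIntegral.integral_const_mul]
  simp
  ring

lemma integral_max_of_one_le {a : ℝ} (ha : 1 ≤ a) :
    ∫ y in (0 : ℝ)..1, max (1 - a * y) 0 = 1 / (2 * a) := by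
  have ha0 : 0 < a := by linarith
  have hc : Continuous fun y : ℝ => max (1 - a * y) 0 := by fun_prop
  rw [← intervalIntegral.integral_add_adjacent_intervals (hc.intervalIntegrable 0 (1 / a))
    (hc.intervalIntegrable (1 / a) 1)]
  have h1 : ∫ y in (0 : ℝ)..(1 / a), max (1 - a * y) 0 = ∫ y in (0 : ℝ)..(1 / a), (1 - a * y) := by
    apply intervalIntegral.integral_congr
    intro y hy
    rw [Set.uIcc_of_le (by positivity)] at hy
    have := (le_div_iff₀ ha0).1 hy.2
    exact max_eq_left (by linarith)
  have h2 : ∫ y in (1 / a)..1, max (1 - a * y) 0 = ∫ y in (1 / a)..1, (0 : ℝ) := by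
    apply intervalIntegral.integral_congr
    intro y hy
    rw [Set.uIcc_of_le (by rw [div_le_one ha0]; exact ha)] at hy
    have := (div_le_iff₀ ha0).1 hy.1
    exact max_eq_right (by linarith)
  rw [h1, h2, intervalIntegral.integral_sub (by simp)
    ((by fun_prop : Continuous fun y : ℝ => a * y).intervalIntegrable _ _)]
  rw [intervalIntegral.integral_const_mul]
  simp
  field_simp
  ring

/-- Multiplying by `m` clears the denominator in a cell length and removes the singularity
at `m = 0`. -/
lemma mul_cellLen_div (b r q k : ℕ) (T : ℝ) {m : ℝ} (hm : 0 < m) :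
    m * cellLen b r q k (T / m) =
      max (T - ((b : ℝ) * k + r) / q * m) 0 - max (T - ((b : ℝ) * k + r + 1) / q * m) 0 := by
  unfold cellLen
  rw [mul_sub, mul_max_of_nonneg _ _ hm.le, mul_max_of_nonneg _ _ hm.le]
  simp only [mul_sub, mul_zero, mul_div_cancel₀ T hm.ne']
  rw [mul_comm m, mul_comm m]

lemma tailSeries_hasSum (b r i : ℕ) (hb : 2 ≤ b) :
    HasSum (fun k : ℕ => (b : ℝ) ^ i /
      (((b : ℝ) * (k + b ^ (i - 1)) + r) * ((b : ℝ) * (k + b ^ (i - 1)) + r + 1)))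
      (tailSeries b r i) := by
  apply Summable.hasSum
  have hb' : (2 : ℝ) ≤ b := by exact_mod_cast hb
  have hB : (1 : ℝ) ≤ (b : ℝ) ^ (i - 1) := one_le_pow₀ (by linarith)
  have hs : Summable fun k : ℕ => (b : ℝ) ^ i * (1 / ((k + 1 : ℕ) : ℝ) ^ 2) :=
    ((summable_nat_add_iff 1).2 (Real.summable_one_div_nat_pow.2 one_lt_two)).mul_left _
  refine Summable.of_nonneg_of_le (fun k => by positivity) (fun k => ?_) hs
  rw [← mul_one_div]
  have h1 : ((k + 1 : ℕ) : ℝ) ≤ (b : ℝ) * (k + b ^ (i - 1)) + r := by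
    have hk : (0 : ℝ) ≤ k := by positivity
    have hr : (0 : ℝ) ≤ r := by positivity
    push_cast
    nlinarith
  gcongr
  rw [pow_two]
  gcongr
  linarith

lemma integral_cell_eq (b r q k : ℕ) :
    ∫ y in Set.Ioc (0 : ℝ) 1, y * cellLen b r q k (1 / y) =
      (∫ y in (0 : ℝ)..1, max (1 - ((b : ℝ) * k + r) / q * y) 0)
        - ∫ y in (0 : ℝ)..1, max (1 - ((b : ℝ) * k + r + 1) / q * y) 0 := by
  have hc : ∀ a : ℝ, Continuous fun y : ℝ => max (1 - a * y) 0 := fun a => by fun_prop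
  rw [← intervalIntegral.integral_sub ((hc _).intervalIntegrable _ _)
    ((hc _).intervalIntegrable _ _), intervalIntegral.integral_of_le zero_le_one]
  exact MeasureTheory.setIntegral_congr_fun measurableSet_Ioc
    fun y hy => mul_cellLen_div b r q k 1 hy.1

lemma integrable_cell (b r q k : ℕ) :
    MeasureTheory.IntegrableOn (fun y : ℝ => y * cellLen b r q k (1 / y)) (Set.Ioc (0 : ℝ) 1) := by
  have hc : Continuous fun y : ℝ => max (1 - ((b : ℝ) * k + r) / q * y) 0
      - max (1 - ((b : ℝ) * k + r + 1) / q * y) 0 := by fun_prop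
  refine (hc.integrableOn_Ioc).congr_fun (fun y hy => ?_) measurableSet_Ioc
  exact (mul_cellLen_div b r q k 1 hy.1).symm

/-- The integral is the area of the part of the unit square on which the digit of `x / y` is `r`:
the cells `k < b ^ (i - 1)` lie below the diagonal and contribute `1 / (2 b)` in total, the others
contribute the tail series. -/
lemma integral_digitLen (b r i : ℕ) (hb : 2 ≤ b) (hi : 1 ≤ i) (hr : r < b) :
    ∫ y in (0 : ℝ)..1, y * digitLen b r (b ^ i) (1 / y) = cconst b r i := by
  have hb' : (2 : ℝ) ≤ b := by exact_mod_cast hb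
  have hr' : (r : ℝ) + 1 ≤ b := by exact_mod_cast hr
  have hr0 : (0 : ℝ) ≤ r := by positivity
  have hq : (b : ℝ) ^ i = b * b ^ (i - 1) := by
    rw [← pow_succ', Nat.sub_add_cancel hi]
  have hB : (0 : ℝ) < (b : ℝ) ^ (i - 1) := by positivity
  have hlow : ∀ k ∈ Finset.range (b ^ (i - 1)),
      ∫ y in Set.Ioc (0 : ℝ) 1, y * cellLen b r (b ^ i) k (1 / y) = 1 / (2 * b ^ i) := by
    intro k hk
    have hk' : (k : ℝ) + 1 ≤ (b : ℝ) ^ (i - 1) := by exact_mod_cast Finset.mem_range.1 hk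
    have h0 : ((b : ℝ) * k + r + 1) / (b ^ i : ℕ) ≤ 1 := by
      push_cast
      rw [hq]
      rw [div_le_one (by positivity)]
      nlinarith
    have h1 : ((b : ℝ) * k + r) / (b ^ i : ℕ) ≤ 1 := by
      refine le_trans ?_ h0
      gcongr ?_ / _
      linarith
    rw [integral_cell_eq, integral_max_of_le_one h1, integral_max_of_le_one h0]
    push_cast
    field_simp
    ring
  have hhigh : ∀ k : ℕ,
      ∫ y in Set.Ioc (0 : ℝ) 1, y * cellLen b r (b ^ i) (k + b ^ (i - 1)) (1 / y)
        = (1 / 2) * ((b : ℝ) ^ i /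
      (((b : ℝ) * (k + b ^ (i - 1)) + r) * ((b : ℝ) * (k + b ^ (i - 1)) + r + 1))) := by
    intro k
    have hk : (0 : ℝ) ≤ k := by positivity
    have h1 : 1 ≤ ((b : ℝ) * (k + b ^ (i - 1) : ℕ) + r) / (b ^ i : ℕ) := by
      push_cast
      rw [hq]
      rw [one_le_div (by positivity)]
      nlinarith
    have h0 : 1 ≤ ((b : ℝ) * (k + b ^ (i - 1) : ℕ) + r + 1) / (b ^ i : ℕ) := by
      refine h1.trans ?_
      gcongr ?_ / _
      linarith
    rw [integral_cell_eq, integral_max_of_one_le h1, integral_max_of_one_le h0]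
    push_cast
    have : (0 : ℝ) < (b : ℝ) * (k + b ^ (i - 1)) + r := by positivity
    field_simp
    ring
  have hsum : HasSum (fun k => ∫ y in Set.Ioc (0 : ℝ) 1, y * cellLen b r (b ^ i) k (1 / y))
      (cconst b r i) := by
    have h1 := (tailSeries_hasSum b r i hb).mul_left (1 / 2)
    simp_rw [← hhigh] at h1
    rw [hasSum_nat_add_iff (f := fun k => ∫ y in Set.Ioc (0 : ℝ) 1,
      y * cellLen b r (b ^ i) k (1 / y))] at h1
    rw [Finset.sum_congr rfl hlow] at h1
    have hval : 1 / 2 * tailSeries b r i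
        + ∑ k ∈ Finset.range (b ^ (i - 1)), 1 / (2 * (b : ℝ) ^ i) = cconst b r i := by
      unfold cconst
      rw [Finset.sum_const, Finset.card_range, nsmul_eq_mul, hq]
      push_cast
      field_simp
      ring
    rwa [hval] at h1
  have hnorm : Summable fun k => ∫ y in Set.Ioc (0 : ℝ) 1, ‖y * cellLen b r (b ^ i) k (1 / y)‖ := by
    refine hsum.summable.congr fun k => ?_
    refine MeasureTheory.setIntegral_congr_fun measurableSet_Ioc fun y hy => ?_
    exact (Real.norm_of_nonneg (mul_nonneg hy.1.le (cellLen_nonneg _ _ _ _ _))).symm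
  have := MeasureTheory.hasSum_integral_of_summable_integral_norm
    (fun k => integrable_cell b r (b ^ i) k) hnorm
  rw [intervalIntegral.integral_of_le zero_le_one, ← this.unique hsum]
  simp only [digitLen, tsum_mul_left]

/-! ### Comparing the sum over denominators with its integral -/

lemma mul_digitLen_div_le {b r q : ℕ} (hb : 2 ≤ b) (hq : 1 ≤ q) {T y : ℝ} (hT : 0 ≤ T)
    (hy : 0 ≤ y) : y * digitLen b r q (T / y) ≤ T := by
  rcases hy.eq_or_lt with rfl | hy
  · simpa using hT
  · calc y * digitLen b r q (T / y) ≤ y * (T / y) := by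
          gcongr; exact digitLen_le hb hq (by positivity)
      _ = T := mul_div_cancel₀ T hy.ne'

lemma mul_digitLen_div_nonneg (b r q : ℕ) (T : ℝ) {y : ℝ} (hy : 0 ≤ y) :
    0 ≤ y * digitLen b r q (T / y) := mul_nonneg hy (digitLen_nonneg _ _ _ _)

lemma intervalIntegrable_mul_digitLen {b r q : ℕ} (hb : 2 ≤ b) (hq : 1 ≤ q) {T a c : ℝ}
    (hT : 0 ≤ T) (ha : 0 ≤ a) (hac : a ≤ c) :
    IntervalIntegrable (fun y => y * digitLen b r q (T / y)) MeasureTheory.volume a c := by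
  rw [intervalIntegrable_iff_integrableOn_Ioc_of_le hac]
  have hm : Measurable (digitLen b r q) := (digitLen_mono hb hq).measurable
  refine MeasureTheory.Measure.integrableOn_of_bounded (M := T) (by simp)
    (by fun_prop) ?_
  filter_upwards [MeasureTheory.ae_restrict_mem measurableSet_Ioc] with y hy
  have hy0 : 0 ≤ y := ha.trans hy.1.le
  rw [Real.norm_of_nonneg (mul_digitLen_div_nonneg b r q T hy0)]
  exact mul_digitLen_div_le hb hq hT hy0

/-- Since `digitLen` is `1`-Lipschitz and bounded by the identity, `y ↦ y * digitLen (T / y)`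
has local Lipschitz constant `2 T / m` to the left of `m`. -/
lemma abs_mul_digitLen_sub_le {b r q : ℕ} (hb : 2 ≤ b) (hq : 1 ≤ q) {T m y : ℝ}
    (hT : 0 ≤ T) (hy : 0 < y) (hym : y ≤ m) (hmy : m ≤ y + 1) :
    |y * digitLen b r q (T / y) - m * digitLen b r q (T / m)| ≤ 2 * T / m := by
  have hm : 0 < m := hy.trans_le hym
  have hle : T / m ≤ T / y := by gcongr
  have h1 := digitLen_mono (r := r) hb hq hle
  have h2 := digitLen_sub_le (r := r) hb hq hle
  have h3 := digitLen_nonneg b r q (T / m)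
  have h4 := digitLen_le (r := r) hb hq (u := T / m) (by positivity)
  set A := digitLen b r q (T / y)
  set D := digitLen b r q (T / m)
  have hTy : y * (T / y) = T := mul_div_cancel₀ T hy.ne'
  have hTm : m * (T / m) = T := mul_div_cancel₀ T hm.ne'
  have e : y * A - m * D = y * (A - D) - (m - y) * D := by ring
  have e2 : 2 * T / m = 2 * (T / m) := by ring
  have u1 : 0 ≤ y * (A - D) := mul_nonneg hy.le (by linarith)
  have hTm0 : 0 ≤ T / m := by positivity
  have u2 : y * (A - D) ≤ T / m := by
    calc y * (A - D) ≤ y * (T / y - T / m) := by gcongr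
      _ = (m - y) * (T / m) := by rw [mul_sub, sub_mul, hTy, hTm]
      _ ≤ 1 * (T / m) := by gcongr; linarith
      _ = T / m := one_mul _
  have u3 : 0 ≤ (m - y) * D := mul_nonneg (by linarith) h3
  have u4 : (m - y) * D ≤ T / m := by
    calc (m - y) * D ≤ 1 * (T / m) := by gcongr; linarith
      _ = T / m := one_mul _
  rw [e, e2, abs_le]
  constructor <;> linarith

/-- Substitution `y ↦ T y` in the area integral. -/
lemma integral_scale (b r i : ℕ) (hb : 2 ≤ b) (hi : 1 ≤ i) (hr : r < b) {T : ℝ} (hT : 0 < T) :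
    ∫ y in (0 : ℝ)..T, y * digitLen b r (b ^ i) (T / y) = cconst b r i * T ^ 2 := by
  have h := intervalIntegral.integral_comp_mul_left (a := 0) (b := 1)
    (fun y => y * digitLen b r (b ^ i) (T / y)) hT.ne'
  simp only [mul_zero, mul_one, smul_eq_mul] at h
  have h2 : ∫ x in (0 : ℝ)..1, T * x * digitLen b r (b ^ i) (T / (T * x))
      = T * cconst b r i := by
    rw [← integral_digitLen b r i hb hi hr, ← intervalIntegral.integral_const_mul]
    congr 1
    ext x
    rw [div_mul_eq_div_div, div_self hT.ne', mul_assoc]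
  rw [h2] at h
  field_simp at h
  linarith

lemma sum_inv_le (T : ℝ) (hT : 1 ≤ T) :
    ∑ m ∈ Finset.Icc 1 ⌊T⌋₊, (1 : ℝ) / m ≤ 1 + Real.log T := by
  have := harmonic_floor_le_one_add_log T hT
  rw [harmonic_eq_sum_Icc] at this
  push_cast at this
  simpa [one_div] using this

lemma riemann_sum_bound (b r i : ℕ) (hb : 2 ≤ b) (hi : 1 ≤ i) (hr : r < b) {T : ℝ} (hT : 1 ≤ T) :
    |∑ m ∈ Finset.Icc 1 ⌊T⌋₊, (m : ℝ) * digitLen b r (b ^ i) (T / m) - cconst b r i * T ^ 2|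
      ≤ 2 * T * (1 + Real.log T) + T := by
  have hT0 : 0 < T := by linarith
  have hq : 1 ≤ b ^ i := Nat.one_le_pow _ _ (by omega)
  set G : ℝ → ℝ := fun y => y * digitLen b r (b ^ i) (T / y) with hG
  set M := ⌊T⌋₊ with hM
  have hMT : (M : ℝ) ≤ T := Nat.floor_le hT0.le
  have hMT' : T ≤ M + 1 := (Nat.lt_floor_add_one T).le
  have hInt : ∀ a c, 0 ≤ a → a ≤ c → IntervalIntegrable G MeasureTheory.volume a c :=
    fun a c ha hac => intervalIntegrable_mul_digitLen hb hq hT0.le ha hac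
  have hsplit : ∑ k ∈ Finset.range M, (∫ y in (k : ℝ)..((k + 1 : ℕ) : ℝ), G y)
      + ∫ y in (M : ℝ)..T, G y = cconst b r i * T ^ 2 := by
    rw [intervalIntegral.sum_integral_adjacent_intervals (a := fun k : ℕ => (k : ℝ))
      (fun k _ => hInt _ _ (by positivity) (by push_cast; linarith))]
    rw [Nat.cast_zero, intervalIntegral.integral_add_adjacent_intervals
      (hInt _ _ le_rfl (by positivity)) (hInt _ _ (by positivity) hMT)]
    exact integral_scale b r i hb hi hr hT0
  have hcell : ∀ k : ℕ, |G ((k + 1 : ℕ) : ℝ) - ∫ y in (k : ℝ)..((k + 1 : ℕ) : ℝ), G y|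
      ≤ 2 * T * (1 / ((k + 1 : ℕ) : ℝ)) := by
    intro k
    have hkk : (k : ℝ) ≤ ((k + 1 : ℕ) : ℝ) := by push_cast; linarith
    have hc : G ((k + 1 : ℕ) : ℝ) = ∫ y in (k : ℝ)..((k + 1 : ℕ) : ℝ), G ((k + 1 : ℕ) : ℝ) := by
      rw [intervalIntegral.integral_const]; push_cast; simp
    rw [hc, abs_sub_comm, ← intervalIntegral.integral_sub (hInt _ _ (by positivity) hkk) (by simp)]
    have := intervalIntegral.norm_integral_le_of_norm_le_const (a := (k : ℝ))
      (b := ((k + 1 : ℕ) : ℝ)) (f := fun y => G y - G ((k + 1 : ℕ) : ℝ))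
      (C := 2 * T / ((k + 1 : ℕ) : ℝ)) (by
        intro y hy
        rw [Set.uIoc_of_le hkk] at hy
        have hk0 : (0 : ℝ) ≤ k := by positivity
        refine abs_mul_digitLen_sub_le hb hq hT0.le (by linarith [hy.1]) hy.2 ?_
        push_cast; linarith [hy.1])
    refine this.trans (le_of_eq ?_)
    push_cast
    simp
    ring
  have hlast : |∫ y in (M : ℝ)..T, G y| ≤ T := by
    have := intervalIntegral.norm_integral_le_of_norm_le_const (a := (M : ℝ))
      (b := T) (f := G) (C := T) (by
        intro y hy
        rw [Set.uIoc_of_le hMT] at hy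
        have hy0 : 0 ≤ y := le_trans (by positivity) hy.1.le
        rw [Real.norm_of_nonneg (mul_digitLen_div_nonneg _ _ _ _ hy0)]
        exact mul_digitLen_div_le hb hq hT0.le hy0)
    refine this.trans ?_
    rw [abs_of_nonneg (by linarith)]
    nlinarith
  have hre : ∀ f : ℕ → ℝ, ∑ m ∈ Finset.Icc 1 M, f m = ∑ k ∈ Finset.range M, f (k + 1) := by
    intro f
    rw [Finset.range_eq_Ico, Finset.sum_Ico_add' f 0 M 1]
    rfl
  have hharm := sum_inv_le T hT
  rw [← hM, hre] at hharm
  rw [← hsplit, hre (fun m => (m : ℝ) * digitLen b r (b ^ i) (T / m)), ← sub_sub,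
    ← Finset.sum_sub_distrib]
  refine (abs_sub _ _).trans (add_le_add ?_ hlast)
  refine (Finset.abs_sum_le_sum_abs _ _).trans ((Finset.sum_le_sum fun k _ => hcell k).trans ?_)
  rw [← Finset.mul_sum]
  gcongr

/-- Counting integers in `[x, T]` costs an error of at most one. -/
lemma card_ge_bound {T x : ℝ} (hT : 1 ≤ T) (hx : 0 ≤ x) :
    |(((Finset.Icc 1 ⌊T⌋₊).filter fun n : ℕ => x ≤ n).card : ℝ) - max (T - x) 0| ≤ 1 := by
  have hset : (Finset.Icc 1 ⌊T⌋₊).filter (fun n : ℕ => x ≤ n)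
      = Finset.Icc (max 1 ⌈x⌉₊) ⌊T⌋₊ := by
    ext n
    simp only [Finset.mem_filter, Finset.mem_Icc, max_le_iff, Nat.ceil_le]
    tauto
  rw [hset, Nat.card_Icc]
  have h1 := Nat.floor_le (by linarith : 0 ≤ T)
  have h2 := Nat.lt_floor_add_one T
  have h3 := Nat.le_ceil x
  have h4 := Nat.ceil_lt_add_one hx
  rcases le_or_gt (max 1 ⌈x⌉₊) (⌊T⌋₊ + 1) with h | h
  · rw [Nat.cast_sub h]
    push_cast
    have h5 : (max 1 (⌈x⌉₊ : ℝ)) ≤ ⌊T⌋₊ + 1 := by exact_mod_cast h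
    rw [abs_le]
    rcases max_cases (1 : ℝ) ⌈x⌉₊ with h6 | h6 <;> rcases max_cases (T - x) 0 with h7 | h7 <;>
      constructor <;> linarith
  · rw [Nat.sub_eq_zero_of_le h.le]
    have h8 : ⌊T⌋₊ + 1 < ⌈x⌉₊ := by
      have : 1 ≤ ⌊T⌋₊ := Nat.le_floor (by simpa using hT)
      rcases lt_max_iff.1 h with h | h <;> omega
    have h9 : (⌊T⌋₊ : ℝ) + 1 + 1 ≤ ⌈x⌉₊ := by exact_mod_cast h8
    rw [max_eq_right (by linarith)]
    simp

/-! ### Counting all pairs -/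

/-- The number of integers in a cell is its length up to two units, one for each endpoint. -/
lemma cell_card_bound (b r q k m : ℕ) (hq : 1 ≤ q) (hm : 1 ≤ m) {T : ℝ} (hT : 1 ≤ T) :
    |(((Finset.Icc 1 ⌊T⌋₊).filter fun n : ℕ => q * n / m = b * k + r).card : ℝ)
      - m * cellLen b r q k (T / m)| ≤ 2 := by
  have hq' : (0 : ℝ) < q := by exact_mod_cast hq
  have hm' : (0 : ℝ) < m := by exact_mod_cast hm
  set α : ℝ := ((b : ℝ) * k + r) / q * m with hα
  set β : ℝ := ((b : ℝ) * k + r + 1) / q * m with hβ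
  have hαβ : α ≤ β := by
    rw [hα, hβ]; gcongr ?_ / _ * _; linarith
  have hge : ∀ n : ℕ, α ≤ n ↔ (b * k + r) * m ≤ q * n := by
    intro n
    rw [hα, div_mul_eq_mul_div, div_le_iff₀ hq', mul_comm (n : ℝ)]
    exact_mod_cast Iff.rfl
  have hge' : ∀ n : ℕ, β ≤ n ↔ (b * k + r + 1) * m ≤ q * n := by
    intro n
    rw [hβ, div_mul_eq_mul_div, div_le_iff₀ hq', mul_comm (n : ℝ)]
    exact_mod_cast Iff.rfl
  have hset : (Finset.Icc 1 ⌊T⌋₊).filter (fun n : ℕ => q * n / m = b * k + r)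
      = (Finset.Icc 1 ⌊T⌋₊).filter (fun n : ℕ => α ≤ n)
        \ (Finset.Icc 1 ⌊T⌋₊).filter (fun n : ℕ => β ≤ n) := by
    ext n
    simp only [Finset.mem_filter, Finset.mem_sdiff, hge, hge', ← Nat.le_div_iff_mul_le hm]
    constructor
    · rintro ⟨h1, h2⟩
      exact ⟨⟨h1, by omega⟩, fun h => by omega⟩
    · rintro ⟨⟨h1, h2⟩, h3⟩
      refine ⟨h1, ?_⟩
      have : ¬ b * k + r + 1 ≤ q * n / m := fun h => h3 ⟨h1, h⟩
      omega
  have hsub : (Finset.Icc 1 ⌊T⌋₊).filter (fun n : ℕ => β ≤ n)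
      ⊆ (Finset.Icc 1 ⌊T⌋₊).filter (fun n : ℕ => α ≤ n) :=
    Finset.monotone_filter_right _ fun n _ h => hαβ.trans h
  rw [hset, Finset.card_sdiff_of_subset hsub, Nat.cast_sub (Finset.card_le_card hsub),
    mul_cellLen_div b r q k T hm']
  have h1 := abs_le.1 (card_ge_bound hT (x := α) (by positivity))
  have h2 := abs_le.1 (card_ge_bound hT (x := β) (by positivity))
  rw [abs_le]
  constructor <;> linarith [h1.1, h1.2, h2.1, h2.2]

/-- For a fixed denominator `m` only about `q T / m` cells meet `[0, T]`, each with a bounded error. -/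
lemma column_card_bound (b r q m : ℕ) (hb : 2 ≤ b) (hr : r < b) (hq : 1 ≤ q) (hm : 1 ≤ m)
    {T : ℝ} (hT : 1 ≤ T) :
    |(((Finset.Icc 1 ⌊T⌋₊).filter fun n : ℕ => (q * n / m) % b = r).card : ℝ)
      - m * digitLen b r q (T / m)| ≤ 2 * q * T * (1 / m) + 2 := by
  have hq' : (0 : ℝ) < q := by exact_mod_cast hq
  have hm' : (0 : ℝ) < m := by exact_mod_cast hm
  set K := ⌈(q : ℝ) * (T / m)⌉₊ with hK
  have hK1 : (q : ℝ) * (T / m) ≤ K := Nat.le_ceil _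
  have hK2 : (K : ℝ) < q * (T / m) + 1 := Nat.ceil_lt_add_one (by positivity)
  have hK0 : 0 < K := Nat.ceil_pos.2 (by positivity)
  have hcard : ((Finset.Icc 1 ⌊T⌋₊).filter fun n : ℕ => (q * n / m) % b = r).card
      = ∑ k ∈ Finset.range K,
        ((Finset.Icc 1 ⌊T⌋₊).filter fun n : ℕ => q * n / m = b * k + r).card := by
    rw [Finset.card_eq_sum_card_fiberwise (f := fun n : ℕ => (q * n / m) / b)
      (t := Finset.range K)]
    · refine Finset.sum_congr rfl fun k _ => ?_
      congr 1
      ext n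
      simp only [Finset.mem_filter, and_assoc]
      refine and_congr_right fun _ => ?_
      constructor
      · rintro ⟨h1, h2⟩
        rw [← Nat.div_add_mod (q * n / m) b, h1, h2]
      · intro h
        rw [h, Nat.mul_add_mod, Nat.mod_eq_of_lt hr, Nat.mul_add_div (by omega),
          Nat.div_eq_of_lt hr]
        simp
    · intro n hn
      simp only [Finset.coe_filter, Finset.mem_Icc, Set.mem_ofPred_eq] at hn
      simp only [Finset.coe_range, Set.mem_Iio]
      have hnT : (n : ℝ) ≤ T := (Nat.le_floor_iff (by linarith)).1 hn.1.2
      have h1 : ((q * n / m : ℕ) : ℝ) ≤ K := by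
        refine Nat.cast_div_le.trans (le_trans ?_ hK1)
        push_cast
        rw [mul_div_assoc]
        gcongr
      have h2 : q * n / m ≤ K := by exact_mod_cast h1
      calc q * n / m / b ≤ K / b := Nat.div_le_div_right h2
        _ < K := Nat.div_lt_self hK0 hb
  rw [hcard, digitLen_eq_sum hb hq hK1, Finset.mul_sum, Nat.cast_sum, ← Finset.sum_sub_distrib]
  refine (Finset.abs_sum_le_sum_abs _ _).trans
    ((Finset.sum_le_sum fun k _ => cell_card_bound b r q k m hq hm hT).trans ?_)
  rw [Finset.sum_const, Finset.card_range, nsmul_eq_mul]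
  have : 2 * (q : ℝ) * T * (1 / m) = 2 * (q * (T / m)) := by ring
  linarith

/-- The number of pairs `(n, m)` in `[1, N]²`, coprime or not, with `⌊q n / m⌋ ≡ r (mod b)`; for
`q = b ^ i` this says that the `i`-th digit of `n / m` is `r`. -/
def pairCount (b r q N : ℕ) : ℕ :=
  ((Finset.Icc 1 N ×ˢ Finset.Icc 1 N).filter fun p : ℕ × ℕ => (q * p.1 / p.2) % b = r).card

lemma pairCount_eq_sum (b r q N : ℕ) : pairCount b r q N =
    ∑ m ∈ Finset.Icc 1 N, ((Finset.Icc 1 N).filter fun n : ℕ => (q * n / m) % b = r).card := by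
  unfold pairCount
  simp only [Finset.card_filter]
  rw [Finset.sum_product_right]

lemma pairCount_bound (b r i : ℕ) (hb : 2 ≤ b) (hi : 1 ≤ i) (hr : r < b) :
    ∃ C : ℝ, 0 < C ∧ ∀ T : ℝ, 1 ≤ T →
      |(pairCount b r (b ^ i) ⌊T⌋₊ : ℝ) - cconst b r i * T ^ 2| ≤ C * T * (1 + Real.log T) := by
  have hq : 1 ≤ b ^ i := Nat.one_le_pow _ _ (by omega)
  refine ⟨2 * (b ^ i : ℕ) + 5, by positivity, fun T hT => ?_⟩
  have hlog := Real.log_nonneg hT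
  have h1 := riemann_sum_bound b r i hb hi hr hT
  have h2 : |(pairCount b r (b ^ i) ⌊T⌋₊ : ℝ)
      - ∑ m ∈ Finset.Icc 1 ⌊T⌋₊, (m : ℝ) * digitLen b r (b ^ i) (T / m)|
      ≤ 2 * (b ^ i : ℕ) * T * (1 + Real.log T) + 2 * T := by
    rw [pairCount_eq_sum, Nat.cast_sum, ← Finset.sum_sub_distrib]
    refine (Finset.abs_sum_le_sum_abs _ _).trans ((Finset.sum_le_sum fun m hm =>
      column_card_bound b r (b ^ i) m hb hr hq (Finset.mem_Icc.1 hm).1 hT).trans ?_)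
    rw [Finset.sum_add_distrib, ← Finset.mul_sum, Finset.sum_const, Nat.card_Icc, nsmul_eq_mul,
      Nat.add_sub_cancel]
    have := sum_inv_le T hT
    have := Nat.floor_le (by linarith : 0 ≤ T)
    have : 2 * ((b ^ i : ℕ) : ℝ) * T * ∑ m ∈ Finset.Icc 1 ⌊T⌋₊, (1 : ℝ) / m
        ≤ 2 * ((b ^ i : ℕ) : ℝ) * T * (1 + Real.log T) := by gcongr
    linarith
  refine (abs_sub_le _ _ _).trans ((add_le_add h2 h1).trans ?_)
  have : 0 ≤ T * Real.log T := by positivity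
  nlinarith

/-! ### Möbius inversion -/

open ArithmeticFunction ArithmeticFunction.Moebius in
lemma sum_moebius_common (N n m : ℕ) (hn : n ∈ Finset.Icc 1 N) :
    (∑ d ∈ Finset.Icc 1 N, if d ∣ n ∧ d ∣ m then (μ d : ℝ) else 0)
      = if Nat.gcd n m = 1 then 1 else 0 := by
  rw [Finset.mem_Icc] at hn
  have hg : Nat.gcd n m ≠ 0 := Nat.gcd_ne_zero_left (by omega)
  have hset : (Finset.Icc 1 N).filter (fun d => d ∣ n ∧ d ∣ m) = (Nat.gcd n m).divisors := by
    ext d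
    simp only [Finset.mem_filter, Finset.mem_Icc, Nat.mem_divisors, ← Nat.dvd_gcd_iff]
    constructor
    · rintro ⟨_, h⟩
      exact ⟨h, hg⟩
    · rintro ⟨h, _⟩
      have hdn : d ∣ n := h.trans (Nat.gcd_dvd_left _ _)
      have := Nat.le_of_dvd (by omega) hdn
      have := Nat.pos_of_dvd_of_pos hdn (by omega)
      exact ⟨⟨by omega, by omega⟩, h⟩
  rw [← Finset.sum_filter, hset]
  have h := congrArg (fun f : ArithmeticFunction ℤ => f (Nat.gcd n m)) moebius_mul_coe_zeta
  simp only [coe_mul_zeta_apply, one_apply] at h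
  exact_mod_cast h

/-- The digit depends only on the quotient, so pairs of multiples of `d` rescale to `[1, N / d]²`. -/
lemma pairCount_dvd (b r q N d : ℕ) (hd : 1 ≤ d) :
    (((Finset.Icc 1 N ×ˢ Finset.Icc 1 N).filter fun p : ℕ × ℕ => (q * p.1 / p.2) % b = r).filter
      fun p : ℕ × ℕ => d ∣ p.1 ∧ d ∣ p.2).card = pairCount b r q (N / d) := by
  symm
  unfold pairCount
  refine Finset.card_bij (fun p _ => (d * p.1, d * p.2)) ?_ ?_ ?_
  · rintro ⟨n, m⟩ h
    simp only [Finset.mem_filter, Finset.mem_product, Finset.mem_Icc,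
      Nat.le_div_iff_mul_le hd] at h ⊢
    obtain ⟨⟨⟨h1, h2⟩, h3, h4⟩, h5⟩ := h
    refine ⟨⟨⟨⟨Nat.mul_pos hd h1, by linarith⟩, Nat.mul_pos hd h3, by linarith⟩, ?_⟩,
      dvd_mul_right _ _, dvd_mul_right _ _⟩
    rw [mul_left_comm, Nat.mul_div_mul_left _ _ hd, h5]
  · rintro ⟨n, m⟩ _ ⟨n', m'⟩ _ h
    simp only [Prod.mk.injEq, Nat.mul_right_inj (by omega : d ≠ 0)] at h
    simp [h]
  · rintro ⟨n', m'⟩ h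
    simp only [Finset.mem_filter, Finset.mem_product, Finset.mem_Icc] at h
    obtain ⟨⟨⟨⟨h1, h2⟩, h3, h4⟩, h5⟩, ⟨n, rfl⟩, m, rfl⟩ := h
    refine ⟨(n, m), ?_, rfl⟩
    simp only [Finset.mem_filter, Finset.mem_product, Finset.mem_Icc, Nat.le_div_iff_mul_le hd]
    rw [mul_left_comm, Nat.mul_div_mul_left _ _ hd] at h5
    exact ⟨⟨⟨Nat.pos_of_mul_pos_left h1, by linarith⟩, Nat.pos_of_mul_pos_left h3, by linarith⟩, h5⟩

open ArithmeticFunction ArithmeticFunction.Moebius in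
lemma coprime_count_eq (b r q N : ℕ) :
    ((((Finset.Icc 1 N ×ˢ Finset.Icc 1 N).filter fun p : ℕ × ℕ => (q * p.1 / p.2) % b = r).filter
      fun p : ℕ × ℕ => Nat.gcd p.1 p.2 = 1).card : ℝ)
      = ∑ d ∈ Finset.Icc 1 N, (μ d : ℝ) * pairCount b r q (N / d) := by
  rw [Finset.card_filter]
  push_cast
  have h1 : ∀ p ∈ (Finset.Icc 1 N ×ˢ Finset.Icc 1 N).filter
      (fun p : ℕ × ℕ => (q * p.1 / p.2) % b = r),
      (if Nat.gcd p.1 p.2 = 1 then (1 : ℝ) else 0)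
        = ∑ d ∈ Finset.Icc 1 N, if d ∣ p.1 ∧ d ∣ p.2 then (μ d : ℝ) else 0 := by
    intro p hp
    rw [sum_moebius_common N p.1 p.2 (Finset.mem_product.1 (Finset.mem_filter.1 hp).1).1]
  rw [Finset.sum_congr rfl h1, Finset.sum_comm]
  refine Finset.sum_congr rfl fun d hd => ?_
  rw [← pairCount_dvd b r q N d (Finset.mem_Icc.1 hd).1, ← Finset.sum_filter, Finset.sum_const,
    nsmul_eq_mul, mul_comm]

open ArithmeticFunction ArithmeticFunction.Moebius in
lemma hasSum_moebius_div_sq :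
    HasSum (fun d : ℕ => (μ d : ℝ) / (d : ℝ) ^ 2) (1 / (Real.pi ^ 2 / 6)) := by
  have hs : 1 < (2 : ℂ).re := by simp
  have h1 := (LSeriesSummable_moebius_iff.2 hs).LSeriesHasSum
  have h2 := LSeries_one_mul_Lseries_moebius hs
  rw [LSeries_one_eq_riemannZeta hs, riemannZeta_two] at h2
  have h3 : LSeries (fun n => ((μ n : ℤ) : ℂ)) 2 = ((1 / (Real.pi ^ 2 / 6) : ℝ) : ℂ) := by
    push_cast
    exact eq_one_div_of_mul_eq_one_right h2
  rw [h3] at h1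
  unfold LSeriesHasSum at h1
  rw [← Complex.hasSum_ofReal]
  refine h1.congr_fun ?_
  intro d
  rcases Nat.eq_zero_or_pos d with rfl | hd
  · simp
  · rw [LSeries.term_of_ne_zero hd.ne']
    push_cast
    norm_num

open ArithmeticFunction ArithmeticFunction.Moebius in
lemma moebius_tail_bound (N : ℕ) :
    |∑ d ∈ Finset.Icc 1 N, (μ d : ℝ) / (d : ℝ) ^ 2 - 1 / (Real.pi ^ 2 / 6)|
      ≤ 2 / ((N : ℝ) + 1) := by
  have ht := hasSum_moebius_div_sq.tendsto_sum_nat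
  have ht2 : Filter.Tendsto (fun M => |∑ d ∈ Finset.Icc 1 N, (μ d : ℝ) / (d : ℝ) ^ 2
      - ∑ d ∈ Finset.range M, (μ d : ℝ) / (d : ℝ) ^ 2|) Filter.atTop
      (nhds |∑ d ∈ Finset.Icc 1 N, (μ d : ℝ) / (d : ℝ) ^ 2 - 1 / (Real.pi ^ 2 / 6)|) :=
    (tendsto_const_nhds.sub ht).abs
  refine le_of_tendsto ht2 ?_
  filter_upwards [Filter.eventually_ge_atTop (N + 1)] with M hM
  have hsplit : ∑ d ∈ Finset.range M, (μ d : ℝ) / (d : ℝ) ^ 2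
      = ∑ d ∈ Finset.Icc 1 N, (μ d : ℝ) / (d : ℝ) ^ 2
        + ∑ d ∈ Finset.Ioo N M, (μ d : ℝ) / (d : ℝ) ^ 2 := by
    rw [Finset.range_eq_Ico, ← Finset.sum_Ico_consecutive _ (Nat.zero_le (N + 1)) hM]
    congr 1
    rw [Finset.sum_eq_sum_Ico_succ_bot (by omega)]
    simp
    rfl
  rw [hsplit, sub_add_cancel_left, abs_neg]
  refine (Finset.abs_sum_le_sum_abs _ _).trans (le_trans (Finset.sum_le_sum fun d _ => ?_)
    (sum_Ioo_inv_sq_le N M))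
  rw [abs_div, abs_of_nonneg (by positivity : (0 : ℝ) ≤ (d : ℝ) ^ 2), div_eq_mul_inv]
  have : |(μ d : ℝ)| ≤ 1 := by exact_mod_cast abs_moebius_le_one
  nlinarith [inv_nonneg.2 (by positivity : (0 : ℝ) ≤ (d : ℝ) ^ 2)]

lemma ncard_coprimeDigitSet (b r i : ℕ) (hb : 2 ≤ b) (hi : 1 ≤ i) {T : ℝ} (hT : 0 ≤ T) :
    (coprimeDigitSet T b r i).ncard = (((Finset.Icc 1 ⌊T⌋₊ ×ˢ Finset.Icc 1 ⌊T⌋₊).filter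
      fun p : ℕ × ℕ => (b ^ i * p.1 / p.2) % b = r).filter
      fun p : ℕ × ℕ => Nat.gcd p.1 p.2 = 1).card := by
  rw [← Set.ncard_coe_finset]
  congr 1
  ext ⟨n, m⟩
  simp only [coprimeDigitSet, Set.mem_ofPred_eq, Finset.coe_filter, Finset.mem_filter,
    Finset.mem_product, Finset.mem_Icc, Nat.le_floor_iff hT]
  constructor
  · rintro ⟨h1, h2, h3, h4, h5, h6⟩
    exact ⟨⟨⟨⟨h1, h2⟩, h3, h4⟩, (digitOf_div_eq_iff b r i n m hb hi h3).1 h6⟩, h5⟩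
  · rintro ⟨⟨⟨⟨h1, h2⟩, h3, h4⟩, h6⟩, h5⟩
    exact ⟨h1, h2, h3, h4, h5, (digitOf_div_eq_iff b r i n m hb hi h3).2 h6⟩

open ArithmeticFunction ArithmeticFunction.Moebius in
theorem stmt2 (b r i : ℕ) (hb : 2 ≤ b) (hi : 1 ≤ i) (hr : r < b) :
    ∃ C : ℝ, 0 < C ∧ ∀ T : ℝ, 2 ≤ T →
      |((coprimeDigitSet T b r i).ncard : ℝ)
        - cconst b r i / (Real.pi ^ 2 / 6) * T ^ 2| ≤ C * T * (Real.log T) ^ 2 := by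
  obtain ⟨C, hC, hbound⟩ := pairCount_bound b r i hb hi hr
  set c := cconst b r i with hc
  refine ⟨9 * (C + 2 * |c|), by positivity, fun T hT => ?_⟩
  have hT1 : 1 ≤ T := by linarith
  have hT0 : 0 < T := by linarith
  have hlog0 := Real.log_nonneg hT1
  set N := ⌊T⌋₊ with hN
  have hNT : (N : ℝ) ≤ T := Nat.floor_le hT0.le
  have hNT' : T ≤ N + 1 := (Nat.lt_floor_add_one T).le
  rw [ncard_coprimeDigitSet b r i hb hi hT0.le, coprime_count_eq]
  -- The error of the full count at height `T / d`, summed against `|μ d| ≤ 1`.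
  have h1 : |∑ d ∈ Finset.Icc 1 N, (μ d : ℝ) * pairCount b r (b ^ i) (N / d)
      - ∑ d ∈ Finset.Icc 1 N, (μ d : ℝ) * (c * (T / d) ^ 2)|
      ≤ C * T * (1 + Real.log T) * (1 + Real.log T) := by
    rw [← Finset.sum_sub_distrib]
    have hterm : ∀ d ∈ Finset.Icc 1 N, |(μ d : ℝ) * pairCount b r (b ^ i) (N / d)
        - (μ d : ℝ) * (c * (T / d) ^ 2)| ≤ C * T * (1 + Real.log T) * (1 / d) := by
      intro d hd
      obtain ⟨hd1, hdN⟩ := Finset.mem_Icc.1 hd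
      have hd1' : (1 : ℝ) ≤ d := by exact_mod_cast hd1
      have hd0 : (0 : ℝ) < d := by linarith
      have hdT : (d : ℝ) ≤ T := le_trans (by exact_mod_cast hdN) hNT
      have h1T : 1 ≤ T / d := (one_le_div hd0).2 hdT
      have hb1 := hbound (T / d) h1T
      rw [Nat.floor_div_natCast, ← hN] at hb1
      have hμ : |(μ d : ℝ)| ≤ 1 := by exact_mod_cast abs_moebius_le_one
      have hlog : Real.log (T / d) ≤ Real.log T :=
        Real.log_le_log (by positivity) (div_le_self hT0.le hd1')
      rw [← mul_sub, abs_mul]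
      calc _ ≤ 1 * (C * (T / d) * (1 + Real.log (T / d))) := by gcongr
        _ ≤ 1 * (C * (T / d) * (1 + Real.log T)) := by gcongr
        _ = _ := by ring
    refine (Finset.abs_sum_le_sum_abs _ _).trans ((Finset.sum_le_sum hterm).trans ?_)
    rw [← Finset.mul_sum]
    have := sum_inv_le T hT1
    gcongr
  have h2 : |∑ d ∈ Finset.Icc 1 N, (μ d : ℝ) * (c * (T / d) ^ 2)
      - c / (Real.pi ^ 2 / 6) * T ^ 2| ≤ 2 * |c| * T := by
    have e : ∑ d ∈ Finset.Icc 1 N, (μ d : ℝ) * (c * (T / d) ^ 2) - c / (Real.pi ^ 2 / 6) * T ^ 2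
        = c * T ^ 2 * (∑ d ∈ Finset.Icc 1 N, (μ d : ℝ) / (d : ℝ) ^ 2 - 1 / (Real.pi ^ 2 / 6)) := by
      rw [mul_sub, Finset.mul_sum]
      congr 1
      · refine Finset.sum_congr rfl fun d _ => ?_
        rw [div_pow]; ring
      · ring
    rw [e, abs_mul, abs_mul, abs_of_nonneg (by positivity : 0 ≤ T ^ 2)]
    calc _ ≤ |c| * T ^ 2 * (2 / (N + 1)) := by gcongr; exact moebius_tail_bound N
      _ ≤ |c| * T ^ 2 * (2 / T) := by gcongr
      _ = _ := by field_simp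
  -- Here `T ≥ 2` is used: `1 ≤ 2 log 2`.
  have hL : 1 + Real.log T ≤ 3 * Real.log T := by
    have := Real.log_two_gt_d9
    have := Real.log_le_log two_pos hT
    linarith
  have hsq : (1 + Real.log T) * (1 + Real.log T) ≤ 9 * Real.log T ^ 2 := by nlinarith
  refine (abs_sub_le _ _ _).trans ((add_le_add h1 h2).trans ?_)
  calc C * T * (1 + Real.log T) * (1 + Real.log T) + 2 * |c| * T
      ≤ C * T * ((1 + Real.log T) * (1 + Real.log T))
        + 2 * |c| * T * ((1 + Real.log T) * (1 + Real.log T)) := by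
        have : 1 ≤ (1 + Real.log T) * (1 + Real.log T) := by nlinarith
        have h0 : 0 ≤ 2 * |c| * T := by positivity
        nlinarith
    _ ≤ C * T * (9 * Real.log T ^ 2) + 2 * |c| * T * (9 * Real.log T ^ 2) := by gcongr
    _ = _ := by ring
end

section
/- Let b ≥ 2 and i ≥ 1 be integers and r ∈ {0, 1, …, b−1} a digit. Then b^i · ∫₀¹ ((1 − φ)/(1 − φ^b)) · φ^{b^i + r − 1} dφ = Σ_{k ≥ b^{i−1}} b^i/((bk + r)(bk + r + 1)); in particular c(b, r; i) = 1/(2b) + (b^i/2)·∫₀¹ ((1 − φ)/(1 − φ^b)) · φ^{b^i + r − 1} dφ. -/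
/-!
Expanding `1 / (1 - φ ^ b)` as a geometric series, the integrand becomes
`∑ k, (1 - φ) φ ^ (m + b k)` with `m = b ^ i + r - 1`. Each term is nonnegative on `[0, 1]` and has
integral `1 / ((m + b k + 1) (m + b k + 2))` (`integral_term`), and these integrals are summable
(`summable_term`), so sum and integral may be exchanged (`integral_eq_tsum`). Since
`m + b k + 1 = b (k + b ^ (i - 1)) + r`, the result is the tail series divided by `b ^ i`.
-/

open scoped BigOperators

lemma integral_term (n : ℕ) :
    ∫ φ in (0:ℝ)..1, (1 - φ) * φ ^ n = 1 / (((n : ℝ) + 1) * ((n : ℝ) + 1 + 1)) := by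
  have h : ∀ φ : ℝ, (1 - φ) * φ ^ n = φ ^ n - φ ^ (n + 1) := fun φ => by ring
  simp only [h]
  rw [intervalIntegral.integral_sub (by simp) (by simp), integral_pow, integral_pow]
  have h1 : (n : ℝ) + 1 ≠ 0 := by positivity
  have h2 : (n : ℝ) + 1 + 1 ≠ 0 := by positivity
  push_cast
  field_simp
  simp

lemma summable_term (b m : ℕ) (hb : 1 ≤ b) :
    Summable fun k : ℕ =>
      1 / ((((m + b * k : ℕ) : ℝ) + 1) * (((m + b * k : ℕ) : ℝ) + 1 + 1)) := by
  have h := (summable_nat_add_iff 1).2 (Real.summable_one_div_nat_pow.2 (one_lt_two))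
  refine Summable.of_nonneg_of_le (fun k => by positivity) (fun k => ?_) h
  have hk : (k : ℝ) ≤ ((m + b * k : ℕ) : ℝ) := by
    exact_mod_cast (Nat.le_mul_of_pos_left k hb).trans (Nat.le_add_left _ _)
  apply one_div_le_one_div_of_le (by positivity)
  push_cast at hk ⊢
  rw [sq]
  gcongr
  linarith

lemma hasSum_integrand (b m : ℕ) (hb : b ≠ 0) {φ : ℝ} (h0 : 0 ≤ φ) (h1 : φ ≤ 1) :
    HasSum (fun k : ℕ => (1 - φ) * φ ^ (m + b * k)) ((1 - φ) / (1 - φ ^ b) * φ ^ m) := by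
  rcases h1.eq_or_lt with rfl | h1
  · -- Both sides vanish at the endpoint, the right one through `0 / 0 = 0`.
    simp
  · have h := (hasSum_geometric_of_lt_one (pow_nonneg h0 b) (pow_lt_one₀ h0 h1 hb)).mul_left
      ((1 - φ) * φ ^ m)
    have hterm : (fun k : ℕ => (1 - φ) * φ ^ (m + b * k))
        = fun k : ℕ => (1 - φ) * φ ^ m * (φ ^ b) ^ k := by
      ext k
      rw [pow_add, pow_mul, mul_assoc]
    rwa [hterm, div_mul_eq_mul_div, div_eq_mul_inv]

lemma integral_eq_tsum (b m : ℕ) (hb : 1 ≤ b) :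
    ∫ φ in (0:ℝ)..1, (1 - φ) / (1 - φ ^ b) * φ ^ m
      = ∑' k : ℕ, 1 / ((((m + b * k : ℕ) : ℝ) + 1) * (((m + b * k : ℕ) : ℝ) + 1 + 1)) := by
  have hint : ∀ k : ℕ, MeasureTheory.Integrable (fun φ : ℝ => (1 - φ) * φ ^ (m + b * k))
      (MeasureTheory.volume.restrict (Set.Ioc 0 1)) := fun k =>
    (Continuous.intervalIntegrable (by fun_prop) 0 1).1
  have hval : ∀ k : ℕ, ∫ φ in Set.Ioc (0:ℝ) 1, (1 - φ) * φ ^ (m + b * k)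
      = 1 / ((((m + b * k : ℕ) : ℝ) + 1) * (((m + b * k : ℕ) : ℝ) + 1 + 1)) := fun k => by
    rw [← integral_term, intervalIntegral.integral_of_le zero_le_one]
  have hnorm : ∀ k : ℕ, ∫ φ in Set.Ioc (0:ℝ) 1, ‖(1 - φ) * φ ^ (m + b * k)‖
      = 1 / ((((m + b * k : ℕ) : ℝ) + 1) * (((m + b * k : ℕ) : ℝ) + 1 + 1)) := fun k => by
    rw [← hval]
    refine MeasureTheory.setIntegral_congr_fun measurableSet_Ioc fun φ hφ => ?_
    exact Real.norm_of_nonneg (mul_nonneg (sub_nonneg.2 hφ.2) (pow_nonneg hφ.1.le _))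
  have hsum := MeasureTheory.hasSum_integral_of_summable_integral_norm hint
    (by simpa only [hnorm] using summable_term b m hb)
  simp only [hval] at hsum
  rw [hsum.tsum_eq, intervalIntegral.integral_of_le zero_le_one]
  refine MeasureTheory.setIntegral_congr_fun measurableSet_Ioc fun φ hφ => ?_
  exact (hasSum_integrand b m (by omega) hφ.1.le hφ.2).tsum_eq.symm

theorem stmt4 (b r i : ℕ) (hb : 2 ≤ b) (hi : 1 ≤ i) (hr : r < b) :
    (b : ℝ) ^ i * ∫ φ in (0:ℝ)..1, (1 - φ) / (1 - φ ^ b) * φ ^ (b ^ i + r - 1)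
      = tailSeries b r i ∧
    cconst b r i
      = 1 / (2 * b) +
        (b : ℝ) ^ i / 2 * ∫ φ in (0:ℝ)..1, (1 - φ) / (1 - φ ^ b) * φ ^ (b ^ i + r - 1) := by
  have key : (b : ℝ) ^ i * ∫ φ in (0:ℝ)..1, (1 - φ) / (1 - φ ^ b) * φ ^ (b ^ i + r - 1)
      = tailSeries b r i := by
    rw [integral_eq_tsum b _ (by omega), ← tsum_mul_left, tailSeries]
    refine tsum_congr fun k => ?_
    have hpos : 1 ≤ b ^ i := Nat.one_le_pow _ _ (by omega)
    have hpow : (b : ℝ) ^ i = b * b ^ (i - 1) := by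
      rw [← pow_succ', Nat.sub_add_cancel hi]
    have hidx : (((b ^ i + r - 1 + b * k : ℕ) : ℝ) + 1)
        = (b : ℝ) * (k + b ^ (i - 1)) + r := by
      have hnat : b ^ i + r - 1 + b * k + 1 = b ^ i + r + b * k := by omega
      have hcast : (((b ^ i + r - 1 + b * k : ℕ) : ℝ) + 1) = (b : ℝ) ^ i + r + b * k := by
        exact_mod_cast hnat
      rw [hcast, hpow]
      ring
    rw [hidx, mul_one_div]
  refine ⟨key, ?_⟩
  rw [cconst, ← key]
  ring
end

section
/- Let b ≥ 2 and i ≥ 1 be integers and r ∈ {0, 1, …, b−1} a digit. There exists a constant C > 0 (depending only on b, r, i) such that for every integer T ≥ 1, | |𝒰(T; b, r; i)| − T²/(2b) | ≤ C·T, where 𝒰(T; b, r; i) := {(n, m) ∈ ℕ² : 1 ≤ n, m ≤ T and there exists an integer k with 0 ≤ k ≤ b^{i−1} − 1 and (kb + r)/b^i ≤ n/m < (kb + r + 1)/b^i}. -/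
/-!
Fix the denominator `m` and the index `k`. The numerators `n` counted by `𝒜_k` are the positive
integers in the real interval `[m (kb + r) / b^i, m (kb + r + 1) / b^i)`, so their number differs
from its length `m / b^i` by at most `1` (`abs_card_fiber_sub_le`). The condition `n ≤ T` is
automatic, because `kb + r + 1 ≤ b^i` forces `n < m`. These fibers are pairwise disjoint, so summing
over the `b^(i-1)` values of `k` and over `1 ≤ m ≤ T` gives the main term
`T (T + 1) / 2 * b^(i-1) / b^i = T² / (2b) + T / (2b)` with an error of at most `b^(i-1) T`.
-/

open scoped BigOperators

/-- The set `𝒜_k(T; b, r; i)`. -/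
def Ak (T : ℝ) (b r i k : ℕ) : Set (ℕ × ℕ) :=
  {p | 1 ≤ p.1 ∧ (p.1 : ℝ) ≤ T ∧ 1 ≤ p.2 ∧ (p.2 : ℝ) ≤ T ∧
    ((k * b + r : ℕ) : ℝ) / (b : ℝ) ^ i ≤ (p.1 : ℝ) / (p.2 : ℝ) ∧
    (p.1 : ℝ) / (p.2 : ℝ) < ((k * b + r + 1 : ℕ) : ℝ) / (b : ℝ) ^ i}

/-- The set `𝒰(T; b, r; i)`, the union of the `𝒜_k(T; b, r; i)` for
`0 ≤ k ≤ b^{i-1} - 1`. -/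
def UU (T : ℝ) (b r i : ℕ) : Set (ℕ × ℕ) :=
  {p | ∃ k : ℕ, k ≤ b ^ (i - 1) - 1 ∧ p ∈ Ak T b r i k}

/-- The numerators `n` with `(n, m) ∈ 𝒜_k`, as an interval of natural numbers. The `max` with `1`
excludes `n = 0`, which would otherwise occur when `k = r = 0`. -/
noncomputable def fiber (b r i k m : ℕ) : Finset ℕ :=
  Finset.Ico (max 1 ⌈(m : ℝ) * ((k * b + r : ℕ) : ℝ) / (b : ℝ) ^ i⌉₊)
    ⌈(m : ℝ) * ((k * b + r + 1 : ℕ) : ℝ) / (b : ℝ) ^ i⌉₊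

lemma mem_fiber {b r i k m n : ℕ} (hm : 1 ≤ m) :
    n ∈ fiber b r i k m ↔ 1 ≤ n ∧
      ((k * b + r : ℕ) : ℝ) / (b : ℝ) ^ i ≤ (n : ℝ) / (m : ℝ) ∧
      (n : ℝ) / (m : ℝ) < ((k * b + r + 1 : ℕ) : ℝ) / (b : ℝ) ^ i := by
  have hm' : (0 : ℝ) < m := by exact_mod_cast hm
  rw [fiber, Finset.mem_Ico, max_le_iff, Nat.ceil_le, Nat.lt_ceil, le_div_iff₀ hm',
    div_lt_iff₀ hm', and_assoc, div_mul_eq_mul_div, div_mul_eq_mul_div,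
    mul_comm (m : ℝ), mul_comm (m : ℝ)]

lemma abs_card_fiber_sub_le {b r i k m : ℕ} (hb : 2 ≤ b) (hm : 1 ≤ m) :
    |((fiber b r i k m).card : ℝ) - (m : ℝ) / (b : ℝ) ^ i| ≤ 1 := by
  have hm' : (0 : ℝ) < m := by exact_mod_cast hm
  have hB : (0 : ℝ) < (b : ℝ) ^ i := by positivity
  set x : ℝ := (m : ℝ) * ((k * b + r : ℕ) : ℝ) / (b : ℝ) ^ i with hx
  set y : ℝ := (m : ℝ) * ((k * b + r + 1 : ℕ) : ℝ) / (b : ℝ) ^ i with hy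
  have hx0 : 0 ≤ x := by positivity
  have hxy : y - x = (m : ℝ) / (b : ℝ) ^ i := by
    rw [hx, hy]; push_cast; ring
  have hd : 0 < (m : ℝ) / (b : ℝ) ^ i := by positivity
  have hy0 : 0 < y := by linarith
  have hle : max 1 ⌈x⌉₊ ≤ ⌈y⌉₊ :=
    max_le (Nat.one_le_iff_ne_zero.mpr (Nat.ceil_pos.mpr hy0).ne') (Nat.ceil_mono (by linarith))
  have hcard : ((fiber b r i k m).card : ℝ) = (⌈y⌉₊ : ℝ) - ((max 1 ⌈x⌉₊ : ℕ) : ℝ) := by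
    rw [fiber, Nat.card_Ico, Nat.cast_sub hle]
  have h1 : x ≤ ((max 1 ⌈x⌉₊ : ℕ) : ℝ) :=
    (Nat.le_ceil x).trans (by exact_mod_cast le_max_right _ _)
  have h2 : ((max 1 ⌈x⌉₊ : ℕ) : ℝ) ≤ x + 1 := by
    rw [Nat.cast_max]
    exact max_le (by push_cast; linarith) (Nat.ceil_lt_add_one hx0).le
  have h3 := Nat.le_ceil y
  have h4 := Nat.ceil_lt_add_one hy0.le
  rw [hcard, abs_le]
  constructor <;> linarith

/-- The index `k` is determined by `n / m`, since `kb + r` is the integer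
part of `b^i n / m`. -/
lemma eq_of_mem_fiber {b r i k k' m n : ℕ} (hb : 2 ≤ b) (hm : 1 ≤ m)
    (h : n ∈ fiber b r i k m) (h' : n ∈ fiber b r i k' m) : k = k' := by
  have hB : (0 : ℝ) < (b : ℝ) ^ i := by positivity
  obtain ⟨-, h1, h2⟩ := (mem_fiber hm).1 h
  obtain ⟨-, h3, h4⟩ := (mem_fiber hm).1 h'
  have h5 := (div_lt_div_iff_of_pos_right hB).1 (h1.trans_lt h4)
  have h6 := (div_lt_div_iff_of_pos_right hB).1 (h3.trans_lt h2)
  norm_cast at h5 h6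
  have : k * b = k' * b := by omega
  exact Nat.eq_of_mul_eq_mul_right (by omega) this

lemma UU_eq_biUnion (b r i T : ℕ) (hb : 2 ≤ b) (hi : 1 ≤ i) (hr : r < b) :
    UU T b r i = (((Finset.Icc 1 T ×ˢ Finset.range (b ^ (i - 1))).biUnion fun q =>
      (fiber b r i q.2 q.1).image fun n => (n, q.1) : Finset (ℕ × ℕ)) : Set (ℕ × ℕ)) := by
  have hK : 0 < b ^ (i - 1) := by positivity
  ext ⟨n, m⟩
  simp only [UU, Ak, Set.mem_ofPred_eq, Finset.coe_biUnion, Set.mem_iUnion, Finset.mem_coe,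
    Finset.mem_product, Finset.mem_Icc, Finset.mem_range, Finset.mem_image, Prod.mk.injEq,
    exists_prop, Prod.exists, Nat.cast_le]
  constructor
  · rintro ⟨k, hk, h1, -, h3, h4, h5, h6⟩
    exact ⟨m, k, ⟨⟨h3, h4⟩, by omega⟩, n, (mem_fiber h3).2 ⟨h1, h5, h6⟩, rfl, rfl⟩
  · rintro ⟨m, k, ⟨⟨h3, h4⟩, hk⟩, n, hn, rfl, rfl⟩
    obtain ⟨h1, h5, h6⟩ := (mem_fiber h3).1 hn
    refine ⟨k, by omega, h1, ?_, h3, h4, h5, h6⟩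
    -- `kb + r + 1 ≤ b^i`, hence `n / m < 1`
    have hle : k * b + r + 1 ≤ b ^ i := by
      obtain ⟨j, rfl⟩ : ∃ j, i = j + 1 := ⟨i - 1, by omega⟩
      rw [Nat.add_sub_cancel] at hk
      rw [pow_succ]
      nlinarith
    have hB : (0 : ℝ) < (b : ℝ) ^ i := by positivity
    have hm' : (0 : ℝ) < m := by exact_mod_cast h3
    have hlt : (n : ℝ) / m < 1 := h6.trans_le ((div_le_one hB).2 (by exact_mod_cast hle))
    rw [div_lt_one hm'] at hlt
    have : n < m := by exact_mod_cast hlt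
    omega

lemma ncard_UU (b r i T : ℕ) (hb : 2 ≤ b) (hi : 1 ≤ i) (hr : r < b) :
    (UU T b r i).ncard =
      ∑ q ∈ Finset.Icc 1 T ×ˢ Finset.range (b ^ (i - 1)), (fiber b r i q.2 q.1).card := by
  rw [UU_eq_biUnion b r i T hb hi hr, Set.ncard_coe_finset, Finset.card_biUnion]
  · refine Finset.sum_congr rfl fun q _ => Finset.card_image_of_injective _ fun a c h => ?_
    exact (Prod.mk.inj h).1
  · rintro ⟨m, k⟩ hq ⟨m', k'⟩ - hne
    refine Finset.disjoint_left.2 fun p hp hp' => hne ?_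
    obtain ⟨n, hn, rfl⟩ := Finset.mem_image.1 hp
    obtain ⟨n', hn', h⟩ := Finset.mem_image.1 hp'
    obtain ⟨rfl, rfl⟩ := Prod.mk.inj h
    have hm := (Finset.mem_Icc.1 (Finset.mem_product.1 hq).1).1
    exact Prod.ext rfl (eq_of_mem_fiber hb hm hn hn')

lemma sum_Icc_cast (T : ℕ) : ∑ m ∈ Finset.Icc 1 T, (m : ℝ) = (T : ℝ) * (T + 1) / 2 := by
  induction T with
  | zero => simp
  | succ n ih => rw [Finset.sum_Icc_succ_top (by omega), ih]; push_cast; ring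

theorem stmt6 (b r i : ℕ) (hb : 2 ≤ b) (hi : 1 ≤ i) (hr : r < b) :
    ∃ C : ℝ, 0 < C ∧ ∀ T : ℕ, 1 ≤ T →
      |((UU T b r i).ncard : ℝ) - (T : ℝ) ^ 2 / (2 * b)| ≤ C * T := by
  have hb' : (2 : ℝ) ≤ b := by exact_mod_cast hb
  refine ⟨(b : ℝ) ^ (i - 1) + 1, by positivity, fun T hT => ?_⟩
  have hmain : ∑ q ∈ Finset.Icc 1 T ×ˢ Finset.range (b ^ (i - 1)), (q.1 : ℝ) / (b : ℝ) ^ i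
      = (T : ℝ) ^ 2 / (2 * b) + T / (2 * b) := by
    have hp : (b : ℝ) ^ i = (b : ℝ) ^ (i - 1) * b := by
      rw [← pow_succ, Nat.sub_add_cancel hi]
    have hK : (b : ℝ) ^ (i - 1) ≠ 0 := by positivity
    rw [Finset.sum_product]
    simp only [Finset.sum_const, Finset.card_range, nsmul_eq_mul]
    rw [← Finset.mul_sum, ← Finset.sum_div, sum_Icc_cast, hp]
    push_cast
    field_simp
  have herr : |((UU T b r i).ncard : ℝ) -
      ∑ q ∈ Finset.Icc 1 T ×ˢ Finset.range (b ^ (i - 1)), (q.1 : ℝ) / (b : ℝ) ^ i|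
      ≤ (b : ℝ) ^ (i - 1) * T := by
    rw [ncard_UU b r i T hb hi hr, Nat.cast_sum, ← Finset.sum_sub_distrib]
    refine (Finset.abs_sum_le_sum_abs _ _).trans ((Finset.sum_le_card_nsmul _ _ 1
      fun q hq => abs_card_fiber_sub_le hb
        (Finset.mem_Icc.1 (Finset.mem_product.1 hq).1).1).trans ?_)
    rw [Finset.card_product, Nat.card_Icc, Finset.card_range, Nat.add_sub_cancel]
    simp [mul_comm]
  rw [hmain] at herr
  have h1 : (T : ℝ) / (2 * b) ≤ T := div_le_self (by positivity) (by linarith)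
  have h0 : (0 : ℝ) ≤ (T : ℝ) / (2 * b) := by positivity
  rw [abs_le] at herr ⊢
  constructor <;> nlinarith [herr.1, herr.2]
end

section
/- Let b ≥ 2 and i ≥ 1 be integers and r ∈ {0, 1, …, b−1} a digit. There exists a constant C > 0 (depending only on b, r, i) such that for every integer T ≥ 2 and every integer k with k ≥ b^{i−1}, | |𝒜_k(T; b, r; i)| − (1/2)(y_k − x_k)·T² | ≤ C·T/k. -/
/-!
Write `B = b^i`, `c = kb + r`, `α = c/B` and `α' = (c+1)/B`, so that `y_k = 1/α`, `x_k = 1/α'`, and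
`1 ≤ α` because `k ≥ b^(i-1)`. The set `𝒜_k` is the difference of the lattice triangles
`{(n, m) : 1 ≤ n, m ≤ T, α m ≤ n}` and the same set for `α'`. Counting a triangle row by row, the
row `m ≤ T/α` holds `T - α m + O(1)` points, and there are only `T/α = O(T/k)` rows
(`abs_card_triangle_sub_le`). The sum of `T - α m` over the rows is exactly
`T²/(2α) - T/2 + α h(T/α)/2` with `h(u) = {u}(1 - {u})` (`sum_rows_eq`).

In the difference of the two triangles the terms `T/2` cancel, and what is left is
`α (h(T/α) - h(T/α'))/2 - h(T/α')/(2B)`. Here `h` is Lipschitz (`abs_saw_sub_le`) and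
`T/α - T/α' = TB/(c(c+1))`, so the first part is `O(T/c)`; and `h(u) ≤ u` for `u ≥ 0` makes the
second part `O(T/c)` as well.
-/

open scoped BigOperators

/-- `y_k = b^i / (bk + r)`. -/
noncomputable def yk (b r i k : ℕ) : ℝ := (b : ℝ) ^ i / ((b : ℝ) * k + r)

/-- `x_k = b^i / (bk + r + 1)`. -/
noncomputable def xk (b r i k : ℕ) : ℝ := (b : ℝ) ^ i / ((b : ℝ) * k + r + 1)

/-- The periodic function `h(u) = {u}(1 - {u})`. -/
noncomputable def saw (u : ℝ) : ℝ := Int.fract u * (1 - Int.fract u)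

lemma saw_nonneg (u : ℝ) : 0 ≤ saw u :=
  mul_nonneg (Int.fract_nonneg u) (by linarith [Int.fract_lt_one u])

lemma saw_le_self {u : ℝ} (hu : 0 ≤ u) : saw u ≤ u := by
  have h0 := Int.fract_nonneg u
  have h1 : Int.fract u ≤ u := by
    have : (0 : ℝ) ≤ (⌊u⌋ : ℝ) := by exact_mod_cast Int.floor_nonneg.2 hu
    have := Int.self_sub_floor u
    linarith
  unfold saw
  nlinarith

lemma saw_le_one (u : ℝ) : saw u ≤ 1 := by
  have h0 := Int.fract_nonneg u
  have h1 := Int.fract_lt_one u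
  unfold saw
  nlinarith

/-- Among the parabolas `(u - n)(n + 1 - u)`, `n ∈ ℤ`, the one with `n = ⌊u⌋` is the largest. -/
lemma parabola_le_saw (u : ℝ) (n : ℤ) : (u - n) * (n + 1 - u) ≤ saw u := by
  have h0 := Int.fract_nonneg u
  have h1 := Int.fract_lt_one u
  have hu := Int.self_sub_floor u
  set f := Int.fract u
  have e : u = ⌊u⌋ + f := by linarith
  unfold saw
  change _ ≤ f * (1 - f)
  obtain ⟨d, hd⟩ : ∃ d : ℤ, d = ⌊u⌋ - n := ⟨_, rfl⟩
  have hd' : (d : ℝ) = ⌊u⌋ - n := by rw [hd]; push_cast; ring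
  have e2 : u - n = d + f := by linarith
  have e3 : (n : ℝ) + 1 - u = 1 - d - f := by linarith
  rw [e2, e3]
  rcases lt_trichotomy d 0 with h | h | h
  · have : (d : ℝ) ≤ -1 := by exact_mod_cast (by omega : d ≤ -1)
    nlinarith
  · subst h; simp
  · have : (1 : ℝ) ≤ d := by exact_mod_cast h
    nlinarith

lemma saw_sub_le (u v : ℝ) : saw v - saw u ≤ 2 * |u - v| := by
  rcases le_total 1 |u - v| with h | h
  · linarith [saw_le_one v, saw_nonneg u]
  -- Compare both values on the parabola that carries `v`.
  have h0 := Int.fract_nonneg v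
  have h1 := Int.fract_lt_one v
  have hv := Int.self_sub_floor v
  have hp := parabola_le_saw u ⌊v⌋
  have e : u - ⌊v⌋ = Int.fract v + (u - v) := by linarith
  have e2 : (⌊v⌋ : ℝ) + 1 - u = 1 - Int.fract v - (u - v) := by linarith
  rw [e, e2] at hp
  unfold saw at *
  generalize Int.fract v = f at *
  generalize Int.fract u * (1 - Int.fract u) = w at *
  generalize u - v = t at *
  have h5 : f * (1 - f) - (f + t) * (1 - f - t) = t * (2 * f - 1 + t) := by ring
  have h6 : t * (2 * f - 1 + t) ≤ |t| * 2 := by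
    refine (le_abs_self _).trans ?_
    rw [abs_mul]
    have := abs_le.1 h
    exact mul_le_mul_of_nonneg_left (abs_le.2 ⟨by linarith, by linarith⟩) (abs_nonneg t)
  linarith

lemma abs_saw_sub_le (u v : ℝ) : |saw u - saw v| ≤ 2 * |u - v| := by
  rw [abs_le]
  have h1 := saw_sub_le u v
  have h2 := saw_sub_le v u
  rw [abs_sub_comm v u] at h2
  constructor <;> linarith

/-- The lattice points `(n, m)` of the square `[1, T]²` with `α m ≤ n`. -/
noncomputable def triangle (T : ℕ) (α : ℝ) : Finset (ℕ × ℕ) :=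
  (Finset.Icc 1 T ×ˢ Finset.Icc 1 T).filter fun p => α * p.2 ≤ p.1

lemma card_triangle (T : ℕ) {α : ℝ} (hα : 1 ≤ α) :
    (triangle T α).card = ∑ m ∈ Finset.Icc 1 ⌊T / α⌋₊, (T + 1 - ⌈α * m⌉₊) := by
  have hα0 : 0 < α := by linarith
  have hsub : Finset.Icc 1 ⌊T / α⌋₊ ⊆ Finset.Icc 1 T := by
    apply Finset.Icc_subset_Icc_right
    apply Nat.floor_le_of_le
    exact div_le_self (Nat.cast_nonneg T) hα
  have hrow : ∀ m ∈ Finset.Icc 1 T,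
      ((Finset.Icc 1 T).filter fun n : ℕ => α * m ≤ n).card = T + 1 - ⌈α * m⌉₊ := by
    intro m hm
    rw [← Nat.card_Icc]
    congr 1
    ext n
    have hm1 : (1 : ℝ) ≤ m := by exact_mod_cast (Finset.mem_Icc.1 hm).1
    simp only [Finset.mem_filter, Finset.mem_Icc, Nat.ceil_le]
    constructor
    · rintro ⟨⟨h1, h2⟩, h3⟩
      exact ⟨h3, h2⟩
    · rintro ⟨h3, h2⟩
      refine ⟨⟨?_, h2⟩, h3⟩
      have : (1 : ℝ) ≤ n := by nlinarith
      exact_mod_cast this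
  unfold triangle
  rw [Finset.card_filter, Finset.sum_product_right, Finset.sum_subset hsub]
  · refine Finset.sum_congr rfl fun m hm => ?_
    rw [← hrow m hm, Finset.card_filter]
  · intro m hm hm'
    have hlt : ⌊T / α⌋₊ < m := by
      by_contra hcon
      exact hm' (Finset.mem_Icc.2 ⟨(Finset.mem_Icc.1 hm).1, by omega⟩)
    have h2 := (Nat.floor_lt (by positivity)).1 hlt
    rw [div_lt_iff₀ hα0] at h2
    have : T < ⌈α * m⌉₊ := Nat.lt_ceil.2 (by linarith)
    omega

lemma sum_rows_eq (T : ℕ) {α : ℝ} (hα : 0 < α) :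
    ∑ m ∈ Finset.Icc 1 ⌊T / α⌋₊, ((T : ℝ) - α * m) =
      (T : ℝ) ^ 2 / (2 * α) - T / 2 + α * saw (T / α) / 2 := by
  have key : ∀ M : ℕ, ∑ m ∈ Finset.Icc 1 M, ((T : ℝ) - α * m) = T * M - α * (M * (M + 1)) / 2 := by
    intro M
    induction M with
    | zero => simp
    | succ M ih => rw [Finset.sum_Icc_succ_top (by omega), ih]; push_cast; ring
  rw [key]
  have hM : ((⌊T / α⌋₊ : ℕ) : ℝ) = T / α - Int.fract (T / α) := by
    rw [natCast_floor_eq_intCast_floor (by positivity)]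
    linarith [Int.self_sub_floor (T / α)]
  rw [hM]
  unfold saw
  field_simp
  ring

lemma abs_card_triangle_sub_le (T : ℕ) {α : ℝ} (hα : 1 ≤ α) :
    |((triangle T α).card : ℝ) - ((T : ℝ) ^ 2 / (2 * α) - T / 2 + α * saw (T / α) / 2)|
      ≤ T / α := by
  have hα0 : 0 < α := by linarith
  rw [card_triangle T hα, ← sum_rows_eq T hα0, Nat.cast_sum, ← Finset.sum_sub_distrib]
  have hM : ((⌊T / α⌋₊ : ℕ) : ℝ) ≤ T / α := Nat.floor_le (by positivity)
  refine (Finset.abs_sum_le_sum_abs _ _).trans ((Finset.sum_le_card_nsmul _ _ 1 ?_).trans ?_)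
  · intro m hm
    have h1 : (m : ℝ) ≤ T / α :=
      le_trans (by exact_mod_cast (Finset.mem_Icc.1 hm).2) hM
    rw [le_div_iff₀ hα0] at h1
    have h2 : ⌈α * m⌉₊ ≤ T := Nat.ceil_le.2 (by linarith)
    have h3 := Nat.le_ceil (α * m)
    have h4 := Nat.ceil_lt_add_one (show 0 ≤ α * m by positivity)
    rw [Nat.cast_sub (by omega)]
    push_cast
    rw [abs_le]
    constructor <;> linarith
  · simpa using hM

lemma triangle_subset (T : ℕ) {α β : ℝ} (h : α ≤ β) : triangle T β ⊆ triangle T α := by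
  intro p hp
  simp only [triangle, Finset.mem_filter] at hp ⊢
  exact ⟨hp.1, (mul_le_mul_of_nonneg_right h (Nat.cast_nonneg _)).trans hp.2⟩

lemma Ak_eq (T b r i k : ℕ) :
    Ak T b r i k = ((triangle T (((k * b + r : ℕ) : ℝ) / (b : ℝ) ^ i) \
      triangle T (((k * b + r + 1 : ℕ) : ℝ) / (b : ℝ) ^ i) : Finset (ℕ × ℕ)) : Set (ℕ × ℕ)) := by
  ext ⟨n, m⟩
  simp only [Ak, triangle, Set.mem_ofPred_eq, Finset.coe_sdiff, Set.mem_sdiff, Finset.mem_coe,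
    Finset.mem_filter, Finset.mem_product, Finset.mem_Icc, Nat.cast_le]
  constructor
  · rintro ⟨h1, h2, h3, h4, h5, h6⟩
    have hm : (0 : ℝ) < m := by exact_mod_cast h3
    rw [le_div_iff₀ hm] at h5
    rw [div_lt_iff₀ hm] at h6
    exact ⟨⟨⟨⟨h1, h2⟩, h3, h4⟩, h5⟩, fun h => absurd h.2 (not_le.2 h6)⟩
  · rintro ⟨⟨⟨⟨h1, h2⟩, h3, h4⟩, h5⟩, h6⟩
    have hm : (0 : ℝ) < m := by exact_mod_cast h3
    refine ⟨h1, h2, h3, h4, (le_div_iff₀ hm).2 h5, (div_lt_iff₀ hm).2 ?_⟩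
    exact not_le.1 fun h => h6 ⟨⟨⟨h1, h2⟩, h3, h4⟩, h⟩

theorem stmt7 (b r i : ℕ) (hb : 2 ≤ b) (hi : 1 ≤ i) (hr : r < b) :
    ∃ C : ℝ, 0 < C ∧ ∀ T : ℕ, 2 ≤ T → ∀ k : ℕ, b ^ (i - 1) ≤ k →
      |((Ak T b r i k).ncard : ℝ) - (1 / 2) * (yk b r i k - xk b r i k) * (T : ℝ) ^ 2|
        ≤ C * T / k := by
  refine ⟨2 * (b : ℝ) ^ i + 2, by positivity, fun T _ k hk => ?_⟩
  have hk0 : 0 < k := lt_of_lt_of_le (by positivity) hk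
  have hBc : b ^ i ≤ k * b + r := by
    calc b ^ i = b ^ (i - 1) * b := by rw [← pow_succ]; congr 1; omega
      _ ≤ k * b := Nat.mul_le_mul_right _ hk
      _ ≤ _ := Nat.le_add_right _ _
  have hkc : k ≤ k * b + r := by nlinarith
  rw [Ak_eq, Set.ncard_coe_finset]
  have hy : yk b r i k = (b : ℝ) ^ i / ((k * b + r : ℕ) : ℝ) := by
    unfold yk; push_cast; ring
  have hx : xk b r i k = (b : ℝ) ^ i / (((k * b + r : ℕ) : ℝ) + 1) := by
    unfold xk; push_cast; ring
  rw [hy, hx, Nat.cast_succ (k * b + r)]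
  have hB : (0 : ℝ) < (b : ℝ) ^ i := by positivity
  have hBc' : (b : ℝ) ^ i ≤ ((k * b + r : ℕ) : ℝ) := by exact_mod_cast hBc
  have hkc' : (k : ℝ) ≤ ((k * b + r : ℕ) : ℝ) := by exact_mod_cast hkc
  have hk0' : (0 : ℝ) < k := by exact_mod_cast hk0
  generalize ((k * b + r : ℕ) : ℝ) = c at *
  generalize (b : ℝ) ^ i = B at *
  have hc : 0 < c := by linarith
  have hT : (0 : ℝ) ≤ T := Nat.cast_nonneg T
  have hle : c / B ≤ (c + 1) / B := by gcongr; linarith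
  have h1 : 1 ≤ c / B := (one_le_div hB).2 hBc'
  rw [Finset.cast_card_sdiff (triangle_subset T hle)]
  have e1 := abs_card_triangle_sub_le T h1
  have e2 := abs_card_triangle_sub_le T (h1.trans hle)
  have e3 := abs_saw_sub_le (T / (c / B)) (T / ((c + 1) / B))
  have e4 := saw_le_self (show 0 ≤ T / ((c + 1) / B) by positivity)
  have e5 := saw_nonneg (T / ((c + 1) / B))
  have d : (T : ℝ) / (c / B) - T / ((c + 1) / B) = T * B / (c * (c + 1)) := by
    field_simp; ring
  rw [d, abs_of_nonneg (show 0 ≤ T * B / (c * (c + 1)) by positivity)] at e3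
  generalize saw (T / (c / B)) = s at *
  generalize saw (T / ((c + 1) / B)) = s₂ at *
  -- The two parts of the oscillating term, each at most `T / k`.
  have f1 : |c / B * (s - s₂) / 2| ≤ T / k := by
    rw [abs_div, abs_mul, abs_of_pos (show 0 < c / B by positivity), abs_two]
    calc c / B * |s - s₂| / 2 ≤ c / B * (2 * (T * B / (c * (c + 1)))) / 2 := by gcongr
      _ = T / (c + 1) := by field_simp
      _ ≤ T / k := by gcongr; linarith
  have f2 : |s₂ / (2 * B)| ≤ T / k := by
    rw [abs_of_nonneg (by positivity)]
    calc s₂ / (2 * B) ≤ T / ((c + 1) / B) / (2 * B) := by gcongr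
      _ = T / (2 * (c + 1)) := by field_simp
      _ ≤ T / k := by gcongr; linarith
  have g1 : (T : ℝ) / (c / B) ≤ B * (T / k) := by
    calc (T : ℝ) / (c / B) = B * (T / c) := by field_simp
      _ ≤ _ := by gcongr
  have g2 : (T : ℝ) / ((c + 1) / B) ≤ B * (T / k) := by
    calc (T : ℝ) / ((c + 1) / B) = B * (T / (c + 1)) := by field_simp
      _ ≤ _ := by gcongr; linarith
  have hC : (2 * B + 2) * T / k = 2 * (B * (T / k)) + 2 * (T / k) := by ring
  have m : 1 / 2 * (B / c - B / (c + 1)) * (T : ℝ) ^ 2 =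
      ((T : ℝ) ^ 2 / (2 * (c / B)) - T / 2 + c / B * s / 2)
      - ((T : ℝ) ^ 2 / (2 * ((c + 1) / B)) - T / 2 + (c + 1) / B * s₂ / 2)
      - c / B * (s - s₂) / 2 + s₂ / (2 * B) := by
    field_simp
    ring
  rw [hC, m]
  rw [abs_le] at *
  constructor <;> linarith [e1.1, e1.2, e2.1, e2.2, f1.1, f1.2, f2.1, f2.2]
end

section
/- Let b ≥ 2 be an integer and r ∈ {0, 1, …, b−1}. Then, as T → +∞, |{(n, m) ∈ ℕ² : 1 ≤ n, m ≤ T and b·{n/m} = r}| ∼ (gcd(b, r)/b) · T·log T, i.e. the ratio of the left-hand side to (gcd(b, r)/b)·T·log T tends to 1 (with the convention gcd(b, 0) = b). -/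
open scoped BigOperators

/-!
Put `g = gcd(b, r)`, `M = b / g`, `s = r / g`, so that `s < M` are coprime. The condition
`b·{n/m} = r` means `M·(n mod m) = s·m`; by coprimality this forces `m = M k`, and then says exactly
`n ≡ s k (mod M k)` (`condition_iff`). Hence the count is a sum, over `1 ≤ k ≤ T/M`, of the
number of elements of a residue class modulo `M k` in `[1, T]`, which is `⌊T⌋/(M k) + O(1)`
(`residue_count`). Summing gives `(⌊T⌋/M)·H_{⌊T/M⌋} + O(T)` (`count_approx`), and the logarithmic
bounds on the harmonic numbers turn this into `T log T / M + O(T)` with an explicit constant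
(`count_log_approx`).
-/

/-- Lattice points in `[1,T]²` with `b·{n/m} = r` exactly. -/
def boundarySet (T : ℝ) (b r : ℕ) : Set (ℕ × ℕ) :=
  {p | 1 ≤ p.1 ∧ (p.1 : ℝ) ≤ T ∧ 1 ≤ p.2 ∧ (p.2 : ℝ) ≤ T ∧
    (b : ℝ) * Int.fract ((p.1 : ℝ) / (p.2 : ℝ)) = (r : ℝ)}

lemma condition_iff (g M s n m : ℕ) (hg : 0 < g) (hsM : s < M) (hco : Nat.Coprime M s)
    (hm : 1 ≤ m) :
    ((g * M : ℕ) : ℝ) * Int.fract ((n : ℝ) / (m : ℝ)) = ((g * s : ℕ) : ℝ) ↔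
      ∃ k, m = M * k ∧ n ≡ s * k [MOD M * k] := by
  have hm0 : (m : ℝ) ≠ 0 := by positivity
  have hg0 : (g : ℝ) ≠ 0 := by positivity
  have key : ((g * M : ℕ) : ℝ) * Int.fract ((n : ℝ) / (m : ℝ)) = ((g * s : ℕ) : ℝ) ↔
      M * (n % m) = s * m := by
    rw [Int.fract_div_natCast_eq_div_natCast_mod]
    push_cast
    rw [← mul_div_assoc, div_eq_iff hm0, mul_assoc, mul_assoc, mul_right_inj' hg0]
    norm_cast
  rw [key]
  constructor
  · intro h
    obtain ⟨k, rfl⟩ : M ∣ m := hco.dvd_of_dvd_mul_left ⟨_, h.symm⟩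
    refine ⟨k, rfl, ?_⟩
    have h1 : n % (M * k) = s * k := by
      apply Nat.eq_of_mul_eq_mul_left (show 0 < M by omega)
      rw [h]; ring
    rw [← h1]
    exact (Nat.mod_modEq _ _).symm
  · rintro ⟨k, rfl, h⟩
    have hk : 0 < k := Nat.pos_of_ne_zero (by rintro rfl; simp at hm)
    have h1 : n % (M * k) = s * k :=
      Eq.trans h (Nat.mod_eq_of_lt (Nat.mul_lt_mul_of_pos_right hsM hk))
    rw [h1]; ring

lemma residue_count (N v d : ℕ) (hd : 0 < d) :
    |(((Finset.Ioc 0 N).filter (fun n => n ≡ v [MOD d])).card : ℝ) - (N : ℝ) / d| ≤ 1 := by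
  have h := Nat.Ioc_filter_modEq_card 0 N hd v
  have hdR : (0 : ℚ) < d := by exact_mod_cast hd
  have hle : ⌊(((0 : ℕ) : ℚ) - v) / d⌋ ≤ ⌊((N : ℚ) - v) / d⌋ := by
    apply Int.floor_le_floor
    gcongr
    simp
  rw [max_eq_left (by linarith)] at h
  have h1 := Int.floor_le (((N : ℚ) - v) / d)
  have h2 := Int.lt_floor_add_one (((N : ℚ) - v) / d)
  have h3 := Int.floor_le ((((0 : ℕ) : ℚ) - v) / d)
  have h4 := Int.lt_floor_add_one ((((0 : ℕ) : ℚ) - v) / d)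
  have h' : (((Finset.Ioc 0 N).filter (fun n => n ≡ v [MOD d])).card : ℚ) =
      (⌊((N : ℚ) - v) / d⌋ : ℚ) - (⌊(((0 : ℕ) : ℚ) - v) / d⌋ : ℚ) := by exact_mod_cast h
  have e : (N : ℚ) / d = ((N : ℚ) - v) / d - (((0 : ℕ) : ℚ) - v) / d := by
    push_cast; ring
  have hq : |(((Finset.Ioc 0 N).filter (fun n => n ≡ v [MOD d])).card : ℚ) - (N : ℚ) / d| ≤ 1 := by
    rw [abs_le, h', e]
    constructor <;> linarith
  have hR := (Rat.cast_le (K := ℝ)).2 hq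
  push_cast at hR
  exact hR

lemma boundarySet_card (T : ℝ) (hT : 0 ≤ T) (g M s : ℕ) (hg : 0 < g) (hsM : s < M)
    (hco : Nat.Coprime M s) :
    (boundarySet T (g * M) (g * s)).ncard = ∑ k ∈ Finset.Ioc 0 ⌊T / M⌋₊,
      ((Finset.Ioc 0 ⌊T⌋₊).filter (fun n => n ≡ s * k [MOD M * k])).card := by
  have hM : 0 < M := by omega
  have hMR : (0 : ℝ) < M := by exact_mod_cast hM
  have hset : boundarySet T (g * M) (g * s) = (((Finset.Ioc 0 ⌊T / M⌋₊).biUnion fun k =>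
      ((Finset.Ioc 0 ⌊T⌋₊).filter (fun n => n ≡ s * k [MOD M * k])) ×ˢ {M * k} :
        Finset (ℕ × ℕ)) : Set (ℕ × ℕ)) := by
    ext ⟨n, m⟩
    simp only [boundarySet, Set.mem_ofPred_eq, Finset.coe_biUnion, Set.mem_iUnion, Finset.mem_coe,
      Finset.mem_product, Finset.mem_filter, Finset.mem_Ioc, Finset.mem_singleton, exists_prop]
    constructor
    · rintro ⟨h1, h2, h3, h4, h5⟩
      obtain ⟨k, rfl, hk⟩ := (condition_iff g M s n m hg hsM hco h3).1 h5
      refine ⟨k, ⟨Nat.pos_of_ne_zero (by rintro rfl; simp at h3), Nat.le_floor ?_⟩,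
        ⟨⟨h1, Nat.le_floor h2⟩, hk⟩, rfl⟩
      rw [le_div_iff₀ hMR]
      push_cast at h4
      linarith
    · rintro ⟨k, ⟨hk0, hk⟩, ⟨⟨h1, h2⟩, h3⟩, rfl⟩
      have hm : 1 ≤ M * k := Nat.mul_pos hM hk0
      refine ⟨h1, (Nat.le_floor_iff hT).1 h2, hm, ?_,
        (condition_iff g M s n _ hg hsM hco hm).2 ⟨k, rfl, h3⟩⟩
      have := (Nat.le_floor_iff (by positivity)).1 hk
      rw [le_div_iff₀ hMR] at this
      push_cast
      linarith
  rw [hset, Set.ncard_coe_finset, Finset.card_biUnion]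
  · simp
  · intro i _ j _ hij
    rw [Function.onFun, Finset.disjoint_left]
    rintro ⟨n, m⟩ h1 h2
    simp only [Finset.mem_product, Finset.mem_singleton] at h1 h2
    exact hij (Nat.eq_of_mul_eq_mul_left hM (h1.2.symm.trans h2.2))

lemma count_approx (T : ℝ) (hT : 0 ≤ T) (g M s : ℕ) (hg : 0 < g) (hsM : s < M)
    (hco : Nat.Coprime M s) :
    |((boundarySet T (g * M) (g * s)).ncard : ℝ) -
      (⌊T⌋₊ : ℝ) / M * (harmonic ⌊T / M⌋₊ : ℝ)| ≤ T := by
  have hM : 0 < M := by omega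
  have hM1 : (1 : ℝ) ≤ M := by exact_mod_cast hM
  have hH : (⌊T⌋₊ : ℝ) / M * (harmonic ⌊T / M⌋₊ : ℝ) =
      ∑ k ∈ Finset.Ioc 0 ⌊T / M⌋₊, (⌊T⌋₊ : ℝ) / ((M * k : ℕ) : ℝ) := by
    rw [harmonic_eq_sum_Icc]
    push_cast
    rw [Finset.mul_sum]
    refine Finset.sum_congr rfl fun k _ => ?_
    rw [div_mul_eq_div_div, div_eq_mul_inv _ (k : ℝ)]
  rw [boundarySet_card T hT g M s hg hsM hco, hH]
  push_cast
  rw [← Finset.sum_sub_distrib]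
  refine (Finset.abs_sum_le_sum_abs _ _).trans ?_
  calc _ ≤ ∑ k ∈ Finset.Ioc 0 ⌊T / M⌋₊, (1 : ℝ) := by
        refine Finset.sum_le_sum fun k hk => ?_
        have := residue_count ⌊T⌋₊ (s * k) (M * k) (Nat.mul_pos hM (Finset.mem_Ioc.1 hk).1)
        push_cast at this
        exact this
    _ = (⌊T / M⌋₊ : ℝ) := by simp
    _ ≤ T / M := Nat.floor_le (by positivity)
    _ ≤ T := div_le_self hT hM1

lemma count_log_approx (T : ℝ) (g M s : ℕ) (hT : (M : ℝ) ≤ T) (hg : 0 < g) (hsM : s < M)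
    (hco : Nat.Coprime M s) :
    |((boundarySet T (g * M) (g * s)).ncard : ℝ) - T * Real.log T / M| ≤
      (2 + Real.log M) * T := by
  have hM1 : (1 : ℝ) ≤ M := by exact_mod_cast (show 1 ≤ M by omega)
  have hM0 : (0 : ℝ) < M := by linarith
  have hT0 : 0 < T := by linarith
  have hlM : 0 ≤ Real.log M := Real.log_nonneg hM1
  have hlT : Real.log T ≤ T := (Real.log_le_sub_one_of_pos hT0).trans (by linarith)
  have hlTM : Real.log M ≤ Real.log T := Real.log_le_log hM0 hT
  have hc := abs_le.1 (count_approx T hT0.le g M s hg hsM hco)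
  have hlo := log_le_harmonic_floor (T / M) (by positivity)
  have hhi := harmonic_floor_le_one_add_log (T / M) ((one_le_div hM0).2 hT)
  rw [Real.log_div hT0.ne' hM0.ne'] at hlo hhi
  have hf1 := Nat.floor_le hT0.le
  have hf2 := Nat.lt_floor_add_one T
  set H : ℝ := (harmonic ⌊T / M⌋₊ : ℝ)
  set N : ℝ := (⌊T⌋₊ : ℝ)
  have hN : 0 ≤ N := Nat.cast_nonneg _
  have hup : N / M * H ≤ T * Real.log T / M + T := by
    rw [div_mul_eq_mul_div, div_le_iff₀ hM0, add_mul, div_mul_cancel₀ _ hM0.ne']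
    have : N * H ≤ T * (1 + Real.log T) := by
      apply mul_le_mul hf1 (by linarith) (by linarith) hT0.le
    nlinarith
  have hdown : T * Real.log T / M - (1 + Real.log M) * T ≤ N / M * H := by
    rw [div_mul_eq_mul_div, le_div_iff₀ hM0, sub_mul, div_mul_cancel₀ _ hM0.ne']
    have h1 : (T - 1) * (Real.log T - Real.log M) ≤ N * H := by
      apply mul_le_mul (by linarith) hlo (by linarith) hN
    have h2 : (1 + Real.log M) * T ≤ (1 + Real.log M) * T * M :=
      le_mul_of_one_le_right (by positivity) hM1
    nlinarith
  rw [abs_le]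
  constructor
  · nlinarith [hc.1]
  · nlinarith [hc.2, mul_nonneg hlM hT0.le]

theorem stmt12 (b r : ℕ) (hb : 2 ≤ b) (hr : r < b) :
    Filter.Tendsto
      (fun T : ℝ => ((boundarySet T b r).ncard : ℝ) /
        ((Nat.gcd b r : ℝ) / b * (T * Real.log T)))
      Filter.atTop (nhds 1) := by
  have hg : 0 < Nat.gcd b r := Nat.gcd_pos_of_pos_left _ (by omega)
  obtain ⟨M, s, hco, hbM, hrs⟩ := Nat.exists_coprime b r
  set g := Nat.gcd b r
  clear_value g
  rw [mul_comm] at hbM hrs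
  subst hbM hrs
  have hsM : s < M := lt_of_mul_lt_mul_left hr (Nat.zero_le _)
  have hM0 : (0 : ℝ) < M := by exact_mod_cast (show 0 < M by omega)
  have hgR : (g : ℝ) ≠ 0 := by positivity
  have hlim : Filter.Tendsto (fun T : ℝ => (2 + Real.log M) * M / Real.log T)
      Filter.atTop (nhds 0) := Real.tendsto_log_atTop.const_div_atTop _
  rw [tendsto_iff_norm_sub_tendsto_zero]
  refine squeeze_zero' (Filter.Eventually.of_forall fun _ => norm_nonneg _) ?_ hlim
  filter_upwards [Filter.eventually_ge_atTop (M : ℝ), Filter.eventually_gt_atTop 1] with T hT hT1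
  have hT0 : 0 < T := by linarith
  have hl : 0 < Real.log T := Real.log_pos hT1
  have h := count_log_approx T g M s hT hg hsM hco
  have e : ((boundarySet T (g * M) (g * s)).ncard : ℝ) /
        ((g : ℝ) / ((g * M : ℕ) : ℝ) * (T * Real.log T)) - 1 =
      (((boundarySet T (g * M) (g * s)).ncard : ℝ) - T * Real.log T / M) *
        (M / (T * Real.log T)) := by
    push_cast
    field_simp
  rw [e, Real.norm_eq_abs, abs_mul, abs_of_pos (show 0 < M / (T * Real.log T) by positivity)]
  calc _ ≤ (2 + Real.log M) * T * (M / (T * Real.log T)) := by gcongr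
    _ = (2 + Real.log M) * M / Real.log T := by field_simp
end
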